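/- arXiv:2604.18577 — 7 statements merged into one kernel-verified Lean document; each statement's English description precedes it below -/
import Mathlib

section
/- (Lifting theorem for tuples.) Let G be an abelian group, let 𝒜 = (A₁,…,A_q) be a q-tuple of nonempty subsets of G, and fix r ∈ ℕ. Assume that for each i the set A_i is an asymptotic (r,ℓ_i)-approximate group. Then 𝒜 is a chromatic asymptotic (r, ∏_{i=1}^q ℓ_i)-approximate group. -/
open Pointwise BigOperators

/-- The `h`-fold iterated sumset `hA = A + ⋯ + A` (`h` times), with `0A = {0}`. -/
def hfold {G : Type*} [AddCommMonoid G] : ℕ → Set G → Set G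
  | 0, _ => {0}
  | n + 1, A => A + hfold n A

/-- The chromatic sumset `h·𝒜 = h₁A₁ + ⋯ + h_qA_q`. -/
def chromSum {G : Type*} [AddCommMonoid G] {q : ℕ} (h : Fin q → ℕ) (A : Fin q → Set G) :
    Set G :=
  ∑ i, hfold (h i) (A i)

/-- `𝒜` is a chromatic asymptotic `(r,ℓ)`-approximate group: there is a threshold vector
`h₀` such that for all `h ⪰ h₀` there is `X_h ⊆ G` with `|X_h| ≤ ℓ` and
`(rh)·𝒜 ⊆ X_h + h·𝒜`. -/
def IsCAAG {G : Type*} [AddCommGroup G] {q : ℕ} (A : Fin q → Set G) (r ℓ : ℕ) : Prop :=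
  ∃ h₀ : Fin q → ℕ, ∀ h : Fin q → ℕ, (∀ i, h₀ i ≤ h i) →
    ∃ X : Finset G, X.card ≤ ℓ ∧
      chromSum (fun i => r * h i) A ⊆ ↑X + chromSum h A

/-- `A` is an asymptotic `(r,ℓ)`-approximate group: there is `h₀` such that for all
`h ≥ h₀` there is `X_h ⊆ G` with `|X_h| ≤ ℓ` and `r(hA) ⊆ X_h + hA`. -/
def IsAAG {G : Type*} [AddCommGroup G] (A : Set G) (r ℓ : ℕ) : Prop :=
  ∃ h₀ : ℕ, ∀ h : ℕ, h₀ ≤ h →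
    ∃ X : Finset G, X.card ≤ ℓ ∧ hfold r (hfold h A) ⊆ ↑X + hfold h A

/-!
Since `hA` is the `h`-th iterate of `A` in the additive monoid of subsets, `(rh)A = r(hA)`, so each
hypothesis covers the summand `(r hᵢ)Aᵢ` by `ℓᵢ` translates of `hᵢAᵢ`. Adding up these inclusions,
the sum of the sets of translations `Xᵢ` has at most `∏ |Xᵢ|` elements and covers the whole
chromatic sumset.
-/

section IteratedSumset

variable {M : Type*} [AddCommMonoid M] (A : Set M)

theorem hfold_zero : hfold 0 A = 0 := rfl

theorem hfold_succ (n : ℕ) : hfold (n + 1) A = A + hfold n A := rfl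

theorem hfold_add (m n : ℕ) : hfold (m + n) A = hfold m A + hfold n A := by
  induction m with
  | zero => rw [hfold_zero, zero_add, zero_add]
  | succ m ih => rw [Nat.succ_add, hfold_succ, hfold_succ, ih, add_assoc]

theorem hfold_mul (m n : ℕ) : hfold (m * n) A = hfold m (hfold n A) := by
  induction m with
  | zero => rw [zero_mul, hfold_zero, hfold_zero]
  | succ m ih => rw [Nat.succ_mul, add_comm, hfold_add, hfold_succ, ih]

end IteratedSumset

section Covering

variable {ι M : Type*} [AddCommMonoid M] (s : Finset ι)

theorem card_sum_le_prod_card [DecidableEq M] (X : ι → Finset M) :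
    (∑ i ∈ s, X i).card ≤ ∏ i ∈ s, (X i).card := by
  induction s using Finset.cons_induction with
  | empty => simp
  | cons a s ha ih =>
    rw [Finset.sum_cons, Finset.prod_cons]
    exact Finset.card_add_le.trans (Nat.mul_le_mul_left _ ih)

theorem sum_subset_sum_add_sum [DecidableEq M] {B C : ι → Set M} {X : ι → Finset M}
    (hBC : ∀ i ∈ s, B i ⊆ ↑(X i) + C i) :
    ∑ i ∈ s, B i ⊆ ↑(∑ i ∈ s, X i) + ∑ i ∈ s, C i :=
  calc
    ∑ i ∈ s, B i ⊆ ∑ i ∈ s, (↑(X i) + C i) := Set.finsetSum_subset_finsetSum s _ _ hBC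
    _ = ↑(∑ i ∈ s, X i) + ∑ i ∈ s, C i := by rw [Finset.sum_add_distrib, Finset.coe_sum]

theorem exists_card_le_prod_sum_subset_add_sum {B C : ι → Set M} {ℓ : ι → ℕ}
    (hBC : ∀ i ∈ s, ∃ X : Finset M, X.card ≤ ℓ i ∧ B i ⊆ ↑X + C i) :
    ∃ X : Finset M, X.card ≤ ∏ i ∈ s, ℓ i ∧ ∑ i ∈ s, B i ⊆ ↑X + ∑ i ∈ s, C i := by
  classical
  choose! X hcard hcover using hBC
  refine ⟨∑ i ∈ s, X i, ?_, sum_subset_sum_add_sum s hcover⟩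
  exact (card_sum_le_prod_card s X).trans (Finset.prod_le_prod' hcard)

end Covering

/-- Lifting theorem for tuples: if each color class `Aᵢ` is an asymptotic
`(r,ℓᵢ)`-approximate group, then `𝒜` is a chromatic asymptotic
`(r, ∏ᵢ ℓᵢ)`-approximate group. -/
theorem stmt3 {G : Type*} [AddCommGroup G] {q : ℕ} (A : Fin q → Set G)
    (hA : ∀ i, (A i).Nonempty) (r : ℕ) (hr : 0 < r) (ℓ : Fin q → ℕ)
    (hcolor : ∀ i, IsAAG (A i) r (ℓ i)) :
    IsCAAG A r (∏ i, ℓ i) := by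
  choose h₀ hcover using hcolor
  refine ⟨h₀, fun h hh => exists_card_le_prod_sum_subset_add_sum _ fun i _ => ?_⟩
  rw [hfold_mul]
  exact hcover i (h i) (hh i)
end

section
/- (Lattice-covering lemma for simplices.) Let d, R, t ∈ ℕ and put M := ⌊dR/t⌋. Then the set of lattice points Δ_d(R) ∩ ℤ^d can be covered by at most C(M+d, d) translates, by elements of ℤ^d, of Δ_d(t)° ∩ ℤ^d; that is, there exist vectors v₁,…,v_N ∈ ℤ^d with N ≤ C(M+d, d) such that every x ∈ Δ_d(R) ∩ ℤ^d lies in v_j + (Δ_d(t)° ∩ ℤ^d) for some j. -/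
open BigOperators

/-!
Put `δ = t / d` and round each coordinate of a lattice point `x` of `Δ_d(R)` down to a multiple
`δ aᵢ` of `δ`. The vector `v = (⌈δ aᵢ⌉)ᵢ` then satisfies `vᵢ ≤ xᵢ < vᵢ + δ`, where the first
inequality uses that `xᵢ` is an integer; summing over the `d` coordinates gives `x ∈ v + Δ_d(t)°`.
Since `∑ aᵢ ≤ R / δ = d R / t`, the vector `a` ranges over the tuples of natural numbers of sum at
most `M = ⌊d R / t⌋`, and there are `C(M + d, d)` of these.
-/

section Counting

variable (ι : Type*) [Fintype ι]

/-- Adjoining the slack `M - ∑ i, a i` as an extra coordinate turns the tuples of natural numbers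
of sum at most `M`, which index the translates of the covering, into tuples of sum exactly `M`. -/
def sumLeEquivOptionSumEq (M : ℕ) :
    {a : ι → ℕ // ∑ i, a i ≤ M} ≃ {b : Option ι → ℕ // ∑ i, b i = M} where
  toFun a := ⟨fun o ↦ o.elim (M - ∑ i, a.1 i) a.1,
    (Fintype.sum_option _).trans (Nat.sub_add_cancel a.2)⟩
  invFun b := ⟨fun i ↦ b.1 (some i),
    (Nat.le_add_left _ _).trans_eq ((Fintype.sum_option b.1).symm.trans b.2)⟩
  left_inv _ := rfl
  right_inv b := by
    ext (_ | i)
    · exact Nat.sub_eq_of_eq_add (b.2.symm.trans (Fintype.sum_option b.1))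
    · rfl

theorem card_subtype_sum_le (M : ℕ) :
    Nat.card {a : ι → ℕ // ∑ i, a i ≤ M} = (M + Fintype.card ι).choose (Fintype.card ι) := by
  classical
  calc Nat.card {a : ι → ℕ // ∑ i, a i ≤ M}
      = Nat.card (Sym (Option ι) M) := Nat.card_congr <|
        (sumLeEquivOptionSumEq ι M).trans (Sym.equivNatSumOfFintype (Option ι) M).symm
    _ = (M + Fintype.card ι).choose M := by
      rw [Nat.card_eq_fintype_card, Sym.card_sym_eq_choose, Fintype.card_option,
        Nat.add_right_comm, Nat.add_sub_cancel, Nat.add_comm]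
    _ = (M + Fintype.card ι).choose (Fintype.card ι) := Nat.choose_symm_add

instance finite_subtype_sum_le (M : ℕ) : Finite {a : ι → ℕ // ∑ i, a i ≤ M} :=
  Nat.finite_of_card_ne_zero <| by
    rw [card_subtype_sum_le]
    exact (Nat.choose_pos (Nat.le_add_left _ _)).ne'

end Counting

section Covering

variable {K : Type*} [Field K] [LinearOrder K] [IsStrictOrderedRing K] {δ : K}
variable {ι : Type*} [Fintype ι]

theorem sum_lt_of_forall_lt_div_card [Nonempty ι] {y : ι → K} {t : K}
    (hy : ∀ i, y i < t / Fintype.card ι) : ∑ i, y i < t :=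
  calc ∑ i, y i < ∑ _i : ι, t / Fintype.card ι :=
        Finset.sum_lt_sum_of_nonempty Finset.univ_nonempty fun i _ ↦ hy i
    _ = t := by
      rw [Finset.sum_const, Finset.card_univ, nsmul_eq_mul]
      exact mul_div_cancel₀ t (Nat.cast_ne_zero.2 Fintype.card_ne_zero)

theorem sum_floor_div_le_floor_div [FloorSemiring K] (hδ : 0 < δ) {x : ι → K}
    (hx : ∀ i, 0 ≤ x i) {ρ : K} (hρ : ∑ i, x i ≤ ρ) : ∑ i, ⌊x i / δ⌋₊ ≤ ⌊ρ / δ⌋₊ := by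
  apply Nat.le_floor
  calc ((∑ i, ⌊x i / δ⌋₊ : ℕ) : K) = ∑ i, (⌊x i / δ⌋₊ : K) := Nat.cast_sum _ _
    _ ≤ ∑ i, x i / δ := Finset.sum_le_sum fun i _ ↦ Nat.floor_le (div_nonneg (hx i) hδ.le)
    _ = (∑ i, x i) / δ := (Finset.sum_div _ _ _).symm
    _ ≤ ρ / δ := by gcongr

variable [FloorRing K]

theorem ceil_mul_floor_div_le (hδ : 0 < δ) {x : ℤ} (hx : 0 ≤ x) : ⌈δ * ⌊x / δ⌋₊⌉ ≤ x := by
  rw [Int.ceil_le, ← le_div_iff₀' hδ]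
  exact Nat.floor_le (by positivity)

theorem lt_ceil_mul_floor_div_add (hδ : 0 < δ) (x : K) : x < ⌈δ * ⌊x / δ⌋₊⌉ + δ :=
  calc x < δ * (⌊x / δ⌋₊ + 1) := (div_lt_iff₀' hδ).1 (Nat.lt_floor_add_one _)
    _ = δ * ⌊x / δ⌋₊ + δ := mul_add_one _ _
    _ ≤ ⌈δ * ⌊x / δ⌋₊⌉ + δ := by gcongr; exact Int.le_ceil _

theorem exists_cube_cover_simplex (ρ : K) (hδ : 0 < δ) :
    ∃ v : Fin ((⌊ρ / δ⌋₊ + Fintype.card ι).choose (Fintype.card ι)) → ι → ℤ,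
      ∀ x : ι → ℤ, (∀ i, 0 ≤ x i) → ∑ i, (x i : K) ≤ ρ →
        ∃ j, ∀ i, v j i ≤ x i ∧ (x i : K) < v j i + δ := by
  rw [← card_subtype_sum_le]
  let e := Finite.equivFin {a : ι → ℕ // ∑ i, a i ≤ ⌊ρ / δ⌋₊}
  refine ⟨fun j i ↦ ⌈δ * (e.symm j).1 i⌉, fun x hx hρ ↦ ?_⟩
  have hsum : ∑ i, ⌊(x i : K) / δ⌋₊ ≤ ⌊ρ / δ⌋₊ :=
    sum_floor_div_le_floor_div hδ (fun i ↦ Int.cast_nonneg (hx i)) hρ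
  refine ⟨e ⟨_, hsum⟩, fun i ↦ ?_⟩
  simp only [Equiv.symm_apply_apply]
  exact ⟨ceil_mul_floor_div_le hδ (hx i), lt_ceil_mul_floor_div_add hδ (x i)⟩

theorem stmt4_general (ρ : K) {t : K} (ht : 0 < t) :
    ∃ (N : ℕ) (v : Fin N → (ι → ℤ)),
      N ≤ (⌊Fintype.card ι * ρ / t⌋₊ + Fintype.card ι).choose (Fintype.card ι) ∧
      ∀ x : ι → ℤ, (∀ i, 0 ≤ x i) → ∑ i, (x i : K) ≤ ρ →
        ∃ j : Fin N, (∀ i, 0 ≤ x i - v j i) ∧ ∑ i, (x i - v j i : K) < t := by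
  cases isEmpty_or_nonempty ι
  · exact ⟨1, 0, by simp, fun _ _ _ ↦ ⟨0, by simp [ht]⟩⟩
  have hδ : 0 < t / Fintype.card ι := div_pos ht (Nat.cast_pos.2 Fintype.card_pos)
  have hstep : ρ / (t / Fintype.card ι) = Fintype.card ι * ρ / t := by
    rw [div_div_eq_mul_div, mul_comm]
  obtain ⟨v, hv⟩ := exists_cube_cover_simplex (ι := ι) ρ hδ
  refine ⟨_, v, by rw [hstep], fun x hx hρ ↦ ?_⟩
  obtain ⟨j, hj⟩ := hv x hx hρ
  exact ⟨j, fun i ↦ sub_nonneg.2 (hj i).1,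
    sum_lt_of_forall_lt_div_card fun i ↦ sub_lt_iff_lt_add'.2 (hj i).2⟩

end Covering

/-- Lattice-covering lemma for simplices: the lattice points of `Δ_d(R)` can be covered by
at most `C(⌊dR/t⌋ + d, d)` integer translates of the lattice points of `Δ_d(t)°`. -/
theorem stmt4 (d R t : ℕ) (hd : 0 < d) (hR : 0 < R) (ht : 0 < t) :
    ∃ (N : ℕ) (v : Fin N → (Fin d → ℤ)),
      N ≤ (d * R / t + d).choose d ∧
      ∀ x : Fin d → ℤ, (∀ i, 0 ≤ x i) → (∑ i, x i) ≤ (R : ℤ) →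
        ∃ j : Fin N, (∀ i, 0 ≤ x i - v j i) ∧ (∑ i, (x i - v j i)) < (t : ℤ) := by
  rw [← Nat.floor_div_eq_div (K := ℝ)]
  exact_mod_cast Fintype.card_fin d ▸ stmt4_general (ι := Fin d) (R : ℝ) (Nat.cast_pos.2 ht)
end

section
/- Let k, r ∈ ℕ, let e₁,…,e_k be the standard basis of ℤ^k, and let B := {e₁,…,e_k}, so that for h ∈ ℕ₀ the h-fold sumset hB equals {x ∈ ℤ_{≥0}^k : x₁ + ⋯ + x_k = h}. Then for every h ∈ ℕ₀ there exists a set Y_h ⊆ ℤ^k with |Y_h| ≤ C((r+1)(k−1), k−1) such that rhB ⊆ Y_h + hB. -/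
/-!
Write an element of `(rh)A`, where `A` is the range of a family `a` indexed by `k` elements, as
`∑ x i • a i` with natural coefficients of sum `rh`, and fix an index `i₀`. Take `t` about
`h / (k - 1)` and divide each coefficient other than `x i₀` by `t + 1`. The remainders sum to at
most `(k - 1)t ≤ h`, so a suitable coefficient at `i₀` completes them to an element of `hA`. The
quotients sum to at most `r(k - 1)`, so a suitable coefficient at `i₀` completes them to an element
`y` of `(r(k - 1))A`. What is left over is a multiple of `a i₀`, and comparing sums of coefficients
shows that it does not depend on `x`. Hence the fixed translate of `(t + 1) • y` by this multiple
takes at most as many values as there are elements of `(r(k - 1))A`, and these are at most as many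
as the compositions of `r(k - 1)` into `k` nonnegative parts.
-/

open Pointwise BigOperators

theorem card_piAntidiag {ι : Type*} [DecidableEq ι] (s : Finset ι) (n : ℕ) :
    (s.piAntidiag n).card = s.card.multichoose n := by
  rw [← Finset.card_finsuppAntidiag_nat_eq_multichoose, Finset.finsuppAntidiag, Finset.card_map,
    Finset.card_attach]

theorem succ_multichoose_mul (d r : ℕ) :
    (d + 1).multichoose (r * d) = ((r + 1) * d).choose d := by
  rw [Nat.multichoose_eq, Nat.succ_add_sub_one, ← Nat.choose_symm_add, add_one_mul, add_comm]

section Hfold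

variable {ι G : Type*} [Fintype ι]

theorem mem_hfold_range [AddCommMonoid G] {a : ι → G} {n : ℕ} {g : G} :
    g ∈ hfold n (Set.range a) ↔ ∃ x : ι → ℕ, ∑ i, x i = n ∧ ∑ i, x i • a i = g := by
  classical
  induction n generalizing g with
  | zero =>
    simp only [hfold, Set.mem_singleton_iff, Finset.sum_eq_zero_iff, Finset.mem_univ, true_imp_iff]
    refine ⟨fun hg => ⟨0, by simp [hg]⟩, ?_⟩
    rintro ⟨x, hx, rfl⟩
    simp [hx]
  | succ n ih =>
    simp only [hfold, Set.mem_add, Set.exists_range_iff, ih]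
    constructor
    · rintro ⟨j, _, ⟨x, hx, rfl⟩, rfl⟩
      exact ⟨Pi.single j 1 + x, by simp [Finset.sum_add_distrib, hx, add_comm],
        by simp [add_smul, Finset.sum_add_distrib, Pi.single_apply]⟩
    · rintro ⟨x, hx, rfl⟩
      obtain ⟨j, -, hj⟩ : ∃ j ∈ Finset.univ, x j ≠ 0 :=
        Finset.exists_ne_zero_of_sum_ne_zero (hx ▸ n.succ_ne_zero)
      have hle : Pi.single j 1 ≤ x := fun i => by
        obtain rfl | hi := eq_or_ne i j
        · simpa [Nat.one_le_iff_ne_zero] using hj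
        · simp [hi]
      obtain ⟨y, rfl⟩ := exists_add_of_le hle
      refine ⟨j, _, ⟨y, ?_, rfl⟩, by simp [add_smul, Finset.sum_add_distrib, Pi.single_apply]⟩
      simpa [Finset.sum_add_distrib, add_comm] using hx

theorem exists_finset_coe_eq_hfold_range [AddCommMonoid G] (a : ι → G) (n : ℕ) :
    ∃ S : Finset G, S.card ≤ (Fintype.card ι).multichoose n ∧ ↑S = hfold n (Set.range a) := by
  classical
  refine ⟨(Finset.univ.piAntidiag n).image fun x => ∑ i, x i • a i, ?_, ?_⟩
  · exact Finset.card_image_le.trans (card_piAntidiag _ _).le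
  · ext g
    simp [mem_hfold_range]

end Hfold

section Division

variable {ι : Type*}

theorem sum_div_le (s : Finset ι) (x : ι → ℕ) (m : ℕ) :
    ∑ i ∈ s, x i / m ≤ (∑ i ∈ s, x i) / m := by
  induction s using Finset.cons_induction with
  | empty => simp
  | cons i s hi ih =>
    simp only [Finset.sum_cons]
    exact (Nat.add_le_add_left ih _).trans Nat.div_add_div_le_add_div

theorem sum_mod_succ_le (s : Finset ι) (x : ι → ℕ) (t : ℕ) :
    ∑ i ∈ s, x i % (t + 1) ≤ s.card * t :=
  Finset.sum_le_card_nsmul s _ t fun i _ => Nat.le_of_lt_succ (Nat.mod_lt (x i) t.succ_pos)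

theorem exists_mul_le_and_mul_lt (d r h : ℕ) : ∃ t, d * t ≤ h ∧ r * h < (t + 1) * (r * d + 1) := by
  -- For `d = 0` the quotient `h / d` is the junk value `0`, which is too small.
  obtain rfl | hd := d.eq_zero_or_pos
  · exact ⟨r * h, by simp⟩
  · refine ⟨h / d, Nat.mul_div_le h d, ?_⟩
    calc r * h ≤ r * (d * (h / d + 1)) := by gcongr; exact (Nat.lt_mul_div_succ h hd).le
      _ < (h / d + 1) * (r * d + 1) := by linarith [Nat.succ_pos (h / d)]

variable [Fintype ι]

theorem exists_sum_eq_of_sum_compl_le [DecidableEq ι] {i₀ : ι} {f : ι → ℕ} {n : ℕ}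
    (hf : ∑ i ∈ {i₀}ᶜ, f i ≤ n) :
    ∃ g : ι → ℕ, ∑ i, g i = n ∧ ∀ i ≠ i₀, g i = f i := by
  refine ⟨Function.update f i₀ (n - ∑ i ∈ {i₀}ᶜ, f i), ?_, fun i hi => by simp [hi]⟩
  rw [Finset.sum_update_of_mem (Finset.mem_univ i₀), ← Finset.compl_eq_univ_sdiff,
    Nat.sub_add_cancel hf]

theorem exists_sum_eq_forall_ne_eq_mul_add (i₀ : ι) (x : ι → ℕ) {t N h : ℕ}
    (hN : ∑ i, x i < (t + 1) * (N + 1)) (hh : (Fintype.card ι - 1) * t ≤ h) :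
    ∃ q z : ι → ℕ, ∑ i, q i = N ∧ ∑ i, z i = h ∧ ∀ i ≠ i₀, x i = (t + 1) * q i + z i := by
  classical
  have hdiv : ∑ i ∈ {i₀}ᶜ, x i / (t + 1) ≤ N :=
    calc ∑ i ∈ {i₀}ᶜ, x i / (t + 1) ≤ ∑ i, x i / (t + 1) :=
          Finset.sum_le_sum_of_subset (Finset.subset_univ _)
      _ ≤ (∑ i, x i) / (t + 1) := sum_div_le _ _ _
      _ ≤ N := Nat.le_of_lt_succ (Nat.div_lt_of_lt_mul hN)
  have hmod : ∑ i ∈ {i₀}ᶜ, x i % (t + 1) ≤ h := by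
    refine (sum_mod_succ_le _ _ _).trans ?_
    rwa [Finset.card_compl, Finset.card_singleton]
  obtain ⟨q, hq, hqx⟩ := exists_sum_eq_of_sum_compl_le hdiv
  obtain ⟨z, hz, hzx⟩ := exists_sum_eq_of_sum_compl_le hmod
  refine ⟨q, z, hq, hz, fun i hi => ?_⟩
  rw [hqx i hi, hzx i hi, Nat.div_add_mod]

end Division

section Covering

variable {ι G : Type*} [Fintype ι]

theorem sum_smul_eq_of_forall_ne {R M : Type*} [Ring R] [AddCommGroup M] [Module R M]
    (a : ι → M) {i₀ : ι} {x w : ι → R} (hxw : ∀ i ≠ i₀, x i = w i) :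
    ∑ i, x i • a i = (∑ i, x i - ∑ i, w i) • a i₀ + ∑ i, w i • a i := by
  have hzero : ∑ i, (x i - w i) • (a i - a i₀) = 0 := by
    refine Finset.sum_eq_zero fun i _ => ?_
    obtain rfl | hi := eq_or_ne i i₀
    · rw [sub_self, smul_zero]
    · rw [hxw i hi, sub_self, zero_smul]
  simp only [smul_sub, Finset.sum_sub_distrib, ← Finset.sum_smul, sub_smul] at hzero
  rw [sub_smul, ← sub_eq_zero, ← hzero]
  abel

variable [AddCommGroup G]

theorem hfold_range_subset_image_add_hfold (a : ι → G) (i₀ : ι) {n N h t : ℕ}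
    (hn : n < (t + 1) * (N + 1)) (hh : (Fintype.card ι - 1) * t ≤ h) :
    hfold n (Set.range a) ⊆
      (fun y => ((n : ℤ) - ((t + 1) * N + h)) • a i₀ + (t + 1) • y) '' hfold N (Set.range a) +
        hfold h (Set.range a) := by
  intro g hg
  obtain ⟨x, rfl, rfl⟩ := mem_hfold_range.1 hg
  obtain ⟨q, z, rfl, rfl, hx⟩ := exists_sum_eq_forall_ne_eq_mul_add i₀ x hn hh
  refine ⟨_, Set.mem_image_of_mem _ (mem_hfold_range.2 ⟨q, rfl, rfl⟩),
    _, mem_hfold_range.2 ⟨z, rfl, rfl⟩, ?_⟩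
  have hcoeff := sum_smul_eq_of_forall_ne a (x := fun i => (x i : ℤ))
    (w := fun i => (t + 1) * q i + z i) fun i hi => by exact_mod_cast hx i hi
  simp only [add_smul, mul_smul, Finset.sum_add_distrib, ← Finset.mul_sum, ← Finset.smul_sum,
    natCast_zsmul, one_smul] at hcoeff
  push_cast
  simp only [hcoeff, add_smul, one_smul, add_assoc]

theorem stmt5_general [Nonempty ι] (a : ι → G) (r h : ℕ) :
    ∃ Y : Finset G,
      Y.card ≤ ((r + 1) * (Fintype.card ι - 1)).choose (Fintype.card ι - 1) ∧
      hfold (r * h) (Set.range a) ⊆ ↑Y + hfold h (Set.range a) := by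
  classical
  obtain ⟨i₀⟩ := ‹Nonempty ι›
  obtain ⟨t, hth, htr⟩ := exists_mul_le_and_mul_lt (Fintype.card ι - 1) r h
  obtain ⟨S, hcard, hS⟩ := exists_finset_coe_eq_hfold_range a (r * (Fintype.card ι - 1))
  have hcover := hfold_range_subset_image_add_hfold a i₀ htr hth
  rw [← hS, ← Finset.coe_image] at hcover
  refine ⟨_, Finset.card_image_le.trans (hcard.trans_eq ?_), hcover⟩
  rw [← succ_multichoose_mul, Nat.sub_add_cancel Fintype.card_pos]

end Covering

/-- Covering theorem in the free abelian group `ℤ^k` for the standard basis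
`B = {e₁,…,e_k}`: for every `h` there is `Y_h` with
`|Y_h| ≤ C((r+1)(k−1), k−1)` and `(rh)B ⊆ Y_h + hB`. -/
theorem stmt5 (k r : ℕ) (hk : 0 < k) (hr : 0 < r) (h : ℕ) :
    ∃ Y : Finset (Fin k → ℤ),
      Y.card ≤ ((r + 1) * (k - 1)).choose (k - 1) ∧
      hfold (r * h) (Set.range fun j : Fin k => (Pi.single j 1 : Fin k → ℤ)) ⊆
        ↑Y + hfold h (Set.range fun j : Fin k => (Pi.single j 1 : Fin k → ℤ)) := by
  have : Nonempty (Fin k) := ⟨⟨0, hk⟩⟩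
  simpa only [Fintype.card_fin] using
    stmt5_general (fun j : Fin k => (Pi.single j 1 : Fin k → ℤ)) r h
end

section
/- Let G be an abelian group and let A ⊆ G be a finite nonempty set with |A| = k. Then for every r ∈ ℕ and every h ∈ ℕ₀ there exists a set X_h ⊆ G with |X_h| ≤ C((r+1)(k−1), k−1) such that r(hA) ⊆ X_h + hA. -/
open Pointwise BigOperators

/-!
After a translation, `0 ∈ A`. Put `n = |A| - 1` and let `b₁, …, bₙ` be the nonzero elements of `A`.
Then `mA` consists of the combinations `∑ xᵢbᵢ` with `xᵢ ∈ ℕ` and `∑ xᵢ ≤ m`.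
Given such a combination with `∑ xᵢ ≤ rh`, divide each coefficient by `d = ⌊h / n⌋ + 1`, say
`xᵢ = d qᵢ + sᵢ`. Since `sᵢ ≤ ⌊h / n⌋`, the remainders satisfy `∑ sᵢ ≤ h`, and since `h ≤ n d`, the
quotients satisfy `∑ qᵢ ≤ rn`. Hence `(rh)A ⊆ {d u | u ∈ (rn)A} + hA`, and stars and bars bounds
`|(rn)A|` by `C((r + 1)n, n)`. If `n = 0`, all sums are empty and the value `h / 0 = 0` is harmless.
-/

theorem hfold_eq_nsmul {G : Type*} [AddCommMonoid G] (n : ℕ) (A : Set G) :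
    hfold n A = n • A := by
  induction n with
  | zero => rw [hfold, zero_nsmul, Set.singleton_zero]
  | succ n ih => rw [hfold, ih, succ_nsmul']

theorem multichoose_succ_eq_choose (n m : ℕ) : (n + 1).multichoose m = (m + n).choose n := by
  rw [Nat.multichoose_eq, Nat.add_right_comm, Nat.add_sub_cancel, Nat.add_comm, Nat.choose_symm_add]

theorem card_finset_sym {α : Type*} [DecidableEq α] (s : Finset α) (n : ℕ) :
    (s.sym n).card = s.card.multichoose n := by
  rw [← s.attach_map_val, Finset.sym_map, Finset.card_map, Finset.attach_eq_univ, Finset.sym_univ,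
    Finset.card_univ, Sym.card_sym_eq_multichoose, Finset.card_map, Finset.card_univ]

section Division

variable {ι : Type*} (B : Finset ι) (x : ι → ℕ)

theorem sum_mod_div_card_succ_le (h : ℕ) : ∑ b ∈ B, x b % (h / B.card + 1) ≤ h :=
  calc ∑ b ∈ B, x b % (h / B.card + 1)
    _ ≤ ∑ _b ∈ B, h / B.card := Finset.sum_le_sum fun b _ ↦
        Nat.le_of_lt_succ (Nat.mod_lt (x b) (Nat.succ_pos _))
    _ = B.card * (h / B.card) := by rw [Finset.sum_const, smul_eq_mul]
    _ ≤ h := Nat.mul_div_le h B.card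

theorem mul_sum_div_le_sum (d : ℕ) : d * ∑ b ∈ B, x b / d ≤ ∑ b ∈ B, x b := by
  rw [Finset.mul_sum]
  exact Finset.sum_le_sum fun b _ ↦ Nat.mul_div_le (x b) d

variable {B x}

theorem sum_div_div_card_succ_le {r h : ℕ} (hx : ∑ b ∈ B, x b ≤ r * h) :
    ∑ b ∈ B, x b / (h / B.card + 1) ≤ r * B.card := by
  obtain rfl | hB := B.eq_empty_or_nonempty
  · simp
  · refine Nat.le_of_mul_le_mul_left (c := h / B.card + 1) ?_ (Nat.succ_pos _)
    calc (h / B.card + 1) * ∑ b ∈ B, x b / (h / B.card + 1)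
      _ ≤ ∑ b ∈ B, x b := mul_sum_div_le_sum B x _
      _ ≤ r * h := hx
      _ ≤ r * (B.card * (h / B.card + 1)) :=
          Nat.mul_le_mul_left r (Nat.lt_mul_div_succ h hB.card_pos).le
      _ = (h / B.card + 1) * (r * B.card) := by ring

theorem sum_nsmul_eq_nsmul_sum_div_add_sum_mod {G : Type*} [AddCommMonoid G] (f : ι → G)
    (d : ℕ) :
    ∑ b ∈ B, x b • f b = d • ∑ b ∈ B, (x b / d) • f b + ∑ b ∈ B, (x b % d) • f b := by
  simp only [Finset.smul_sum, ← mul_nsmul', ← Finset.sum_add_distrib, ← add_nsmul, Nat.div_add_mod]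

end Division

section AddCommMonoid

variable {G : Type*} [AddCommMonoid G] [DecidableEq G] {A : Finset G}

theorem nsmul_eq_image_sym_sum (A : Finset G) (n : ℕ) :
    n • A = (A.sym n).image fun s : Sym G n ↦ (s : Multiset G).sum := by
  induction n with
  | zero => rfl
  | succ n ih =>
    ext g
    simp [succ_nsmul', ih, Finset.mem_add, Finset.sym_succ, Sym.coe_cons]

theorem card_nsmul_le_multichoose (A : Finset G) (n : ℕ) :
    (n • A).card ≤ A.card.multichoose n := by
  rw [nsmul_eq_image_sym_sum, ← card_finset_sym]
  exact Finset.card_image_le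

theorem sum_nsmul_mem_nsmul_of_zero_mem {ι : Type*} {B : Finset ι} {f : ι → G} (h0 : 0 ∈ A)
    (hf : ∀ b ∈ B, f b ∈ A) {x : ι → ℕ} {m : ℕ} (hx : ∑ b ∈ B, x b ≤ m) :
    ∑ b ∈ B, x b • f b ∈ m • A := by
  refine Finset.nsmul_subset_nsmul_right h0 hx ?_
  rw [← Finset.mem_coe, Finset.coe_nsmul, ← Finset.sum_nsmul_assoc]
  exact Set.finsetSum_mem_finsetSum B _ _ fun b hb ↦
    Set.nsmul_mem_nsmul (Finset.mem_coe.mpr (hf b hb))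

theorem mem_nsmul_iff_exists_sum_erase_zero (h0 : 0 ∈ A) {m : ℕ} {g : G} :
    g ∈ m • A ↔
      ∃ x : G → ℕ, ∑ b ∈ A.erase 0, x b ≤ m ∧ ∑ b ∈ A.erase 0, x b • b = g := by
  constructor
  · rw [nsmul_eq_image_sym_sum, Finset.mem_image]
    rintro ⟨s, hs, rfl⟩
    have hsA : ∀ b ∈ (s : Multiset G), b ∈ A := Finset.mem_sym_iff.mp hs
    refine ⟨fun b ↦ (s : Multiset G).count b, ?_, ?_⟩
    · calc ∑ b ∈ A.erase 0, (s : Multiset G).count b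
        _ ≤ ∑ b ∈ A, (s : Multiset G).count b :=
            Finset.sum_le_sum_of_subset (Finset.erase_subset 0 A)
        _ = m := by rw [Multiset.sum_count_eq_card hsA, Sym.card_coe]
    · calc ∑ b ∈ A.erase 0, (s : Multiset G).count b • b
        _ = ∑ b ∈ A, (s : Multiset G).count b • b := Finset.sum_erase A (nsmul_zero _)
        _ = (s : Multiset G).sum := (Finset.val_sum_eq_sum_count_nsmul hs).symm
  · rintro ⟨x, hx, rfl⟩
    exact sum_nsmul_mem_nsmul_of_zero_mem h0 (fun _ ↦ Finset.mem_of_mem_erase) hx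

theorem mul_nsmul_subset_image_nsmul_add_nsmul (h0 : 0 ∈ A) (r h : ℕ) :
    (r * h) • A ⊆
      ((r * (A.card - 1)) • A).image (fun u ↦ (h / (A.card - 1) + 1) • u) + h • A := by
  rw [← Finset.card_erase_of_mem h0]
  intro g hg
  obtain ⟨x, hx, rfl⟩ := (mem_nsmul_iff_exists_sum_erase_zero h0).mp hg
  rw [sum_nsmul_eq_nsmul_sum_div_add_sum_mod _ (h / (A.erase 0).card + 1)]
  have hA : ∀ b ∈ A.erase 0, b ∈ A := fun _ ↦ Finset.mem_of_mem_erase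
  have hquot := sum_nsmul_mem_nsmul_of_zero_mem h0 hA (sum_div_div_card_succ_le hx)
  have hrem := sum_nsmul_mem_nsmul_of_zero_mem h0 hA (sum_mod_div_card_succ_le (A.erase 0) x h)
  exact Finset.add_mem_add (Finset.mem_image_of_mem _ hquot) hrem

theorem exists_card_le_choose_mul_nsmul_subset_of_zero_mem (h0 : 0 ∈ A) (r h : ℕ) :
    ∃ X : Finset G, X.card ≤ ((r + 1) * (A.card - 1)).choose (A.card - 1) ∧
      (r * h) • A ⊆ X + h • A := by
  refine ⟨_, ?_, mul_nsmul_subset_image_nsmul_add_nsmul h0 r h⟩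
  calc (((r * (A.card - 1)) • A).image _).card
    _ ≤ ((r * (A.card - 1)) • A).card := Finset.card_image_le
    _ ≤ A.card.multichoose (r * (A.card - 1)) := card_nsmul_le_multichoose A _
    _ = (A.card - 1 + 1).multichoose (r * (A.card - 1)) := by
        rw [Nat.sub_add_cancel (Finset.card_pos.mpr ⟨0, h0⟩)]
    _ = ((r + 1) * (A.card - 1)).choose (A.card - 1) := by
        rw [multichoose_succ_eq_choose, Nat.add_one_mul]

end AddCommMonoid

theorem exists_card_le_choose_mul_nsmul_subset {G : Type*} [AddCommGroup G] [DecidableEq G]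
    {A : Finset G} (hA : A.Nonempty) (r h : ℕ) :
    ∃ X : Finset G, X.card ≤ ((r + 1) * (A.card - 1)).choose (A.card - 1) ∧
      (r * h) • A ⊆ X + h • A := by
  obtain ⟨a, ha⟩ := hA
  obtain ⟨A₀, rfl⟩ : ∃ A₀ : Finset G, A = {a} + A₀ :=
    ⟨{-a} + A, by rw [← add_assoc, Finset.singleton_add_singleton, add_neg_cancel,
      Finset.singleton_zero, zero_add]⟩
  have h0 : 0 ∈ A₀ := by simpa [Finset.mem_add] using ha
  obtain ⟨X, hX, hsub⟩ := exists_card_le_choose_mul_nsmul_subset_of_zero_mem h0 r h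
  refine ⟨{(r * h) • a - h • a} + X, ?_, ?_⟩
  · simpa only [Finset.card_singleton_add] using hX
  · calc (r * h) • ({a} + A₀)
      _ = {(r * h) • a} + (r * h) • A₀ := by rw [nsmul_add, Finset.nsmul_singleton]
      _ ⊆ {(r * h) • a} + (X + h • A₀) := Finset.add_subset_add_left hsub
      _ = {(r * h) • a - h • a} + {h • a} + (X + h • A₀) := by
          rw [Finset.singleton_add_singleton, sub_add_cancel]
      _ = {(r * h) • a - h • a} + X + h • ({a} + A₀) := by
          rw [nsmul_add, Finset.nsmul_singleton, add_add_add_comm]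

/-- Finite subsets of an arbitrary abelian group: if `|A| = k`, then for every `r ∈ ℕ`
and `h ∈ ℕ₀` there is `X_h ⊆ G` with `|X_h| ≤ C((r+1)(k−1), k−1)` and
`r(hA) ⊆ X_h + hA`. -/
theorem stmt6 {G : Type*} [AddCommGroup G] (A : Set G) (k : ℕ)
    (hfin : A.Finite) (hne : A.Nonempty) (hcard : A.ncard = k)
    (r : ℕ) (hr : 0 < r) (h : ℕ) :
    ∃ X : Finset G, X.card ≤ ((r + 1) * (k - 1)).choose (k - 1) ∧
      hfold r (hfold h A) ⊆ ↑X + hfold h A := by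
  classical
  lift A to Finset G using hfin
  rw [Set.ncard_coe_finset] at hcard
  obtain ⟨X, hX, hsub⟩ :=
    exists_card_le_choose_mul_nsmul_subset (Finset.coe_nonempty.mp hne) r h
  refine ⟨X, hcard ▸ hX, ?_⟩
  simpa only [hfold_eq_nsmul, mul_nsmul', Finset.coe_nsmul, Finset.coe_add] using
    Finset.coe_subset.mpr hsub
end

section
/- (Inhomogeneous extension.) Let 𝒜 = (A₁,…,A_q) be a chromatic asymptotic (r,ℓ)-approximate group in an abelian group G, and let B ⊆ G be a nonempty finite set of size m. Then the family S_h := h·𝒜 + B is an asymptotic (r, ℓ·C((r+1)(m−1), m−1))-approximate family: there exists h₀ ∈ ℕ₀^q such that for every h ⪰ h₀ there is a set Y_h ⊆ G with |Y_h| ≤ ℓ·C((r+1)(m−1), m−1) and r(h·𝒜 + B) ⊆ Y_h + h·𝒜 + B. -/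
open Pointwise BigOperators

theorem chromSum_mul {G : Type*} [AddCommMonoid G] {q : ℕ} (r : ℕ) (h : Fin q → ℕ)
    (A : Fin q → Set G) : chromSum (fun i => r * h i) A = r • chromSum h A := by
  simp only [chromSum, hfold_eq_nsmul, mul_nsmul', Finset.sum_nsmul]

theorem card_nsmul_le_multichoose_s15 {G : Type*} [AddCommMonoid G] [DecidableEq G] (B : Finset G)
    (n : ℕ) : (n • B).card ≤ B.card.multichoose n := by
  have sums_of_multisets :
      n • B ⊆ Finset.univ.image fun s : Sym B n => (s.1.map Subtype.val).sum := by
    intro x hx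
    obtain ⟨f, rfl⟩ := Finset.mem_nsmul.1 hx
    exact Finset.mem_image.2 ⟨⟨List.ofFn f, by simp⟩, Finset.mem_univ _, by
      simp [List.map_ofFn, Function.comp_def]⟩
  calc (n • B).card ≤ Fintype.card (Sym B n) :=
        (Finset.card_le_card sums_of_multisets).trans Finset.card_image_le
    _ = B.card.multichoose n := by rw [Sym.card_sym_eq_multichoose, Fintype.card_coe]

theorem multichoose_succ_le_choose_mul (k : ℕ) {n c : ℕ} (hnc : n < c) :
    (k + 1).multichoose n ≤ (c * k).choose k := by
  rcases k.eq_zero_or_pos with rfl | hk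
  · simp
  · have hle : k + n ≤ c * k := by nlinarith
    calc (k + 1).multichoose n = (k + n).choose k := by
          rw [Nat.multichoose_eq, Nat.add_right_comm, Nat.add_sub_cancel, Nat.choose_symm_add]
      _ ≤ (c * k).choose k := Nat.choose_le_choose k hle

/-- `S` is an `(r, k)`-approximate group in the sense of Nathanson: its `r`-fold sumset is covered
by at most `k` translates of `S`. This is the property required of each sumset `h·𝒜` and of `B`.
Neither symmetry nor nonemptiness of `S` is required. -/
def IsApproxGroup {G : Type*} [AddCommMonoid G] (r k : ℕ) (S : Set G) : Prop :=
  ∃ X : Finset G, X.card ≤ k ∧ r • S ⊆ ↑X + S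

namespace IsApproxGroup

variable {G : Type*} [AddCommMonoid G] {r k l : ℕ} {S T : Set G}

theorem mono (hS : IsApproxGroup r k S) (hkl : k ≤ l) : IsApproxGroup r l S :=
  let ⟨X, hX, hcover⟩ := hS
  ⟨X, hX.trans hkl, hcover⟩

theorem add (hS : IsApproxGroup r k S) (hT : IsApproxGroup r l T) :
    IsApproxGroup r (k * l) (S + T) := by
  classical
  obtain ⟨X, hX, hSX⟩ := hS
  obtain ⟨Y, hY, hTY⟩ := hT
  refine ⟨X + Y, Finset.card_add_le.trans (Nat.mul_le_mul hX hY), ?_⟩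
  rw [nsmul_add, Finset.coe_add, add_add_add_comm]
  exact Set.add_subset_add hSX hTY

end IsApproxGroup

theorem isApproxGroup_coe_finset {G : Type*} [AddCommMonoid G] (B : Finset G) (n : ℕ) :
    IsApproxGroup (n + 1) (B.card.multichoose n) (B : Set G) := by
  classical
  refine ⟨n • B, card_nsmul_le_multichoose_s15 B n, ?_⟩
  rw [succ_nsmul, Finset.coe_nsmul]

theorem isApproxGroup_choose {G : Type*} [AddCommMonoid G] {B : Finset G} (hB : B.Nonempty)
    {r : ℕ} (hr : 0 < r) :
    IsApproxGroup r (((r + 1) * (B.card - 1)).choose (B.card - 1)) (B : Set G) := by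
  obtain ⟨n, rfl⟩ := Nat.exists_eq_add_one.2 hr
  obtain ⟨k, hk⟩ := Nat.exists_eq_add_one.2 hB.card_pos
  refine (isApproxGroup_coe_finset B n).mono ?_
  rw [hk, Nat.add_sub_cancel]
  exact multichoose_succ_le_choose_mul k (by lia)

theorem isCAAG_iff {G : Type*} [AddCommGroup G] {q : ℕ} {A : Fin q → Set G} {r ℓ : ℕ} :
    IsCAAG A r ℓ ↔
      ∃ h₀ : Fin q → ℕ, ∀ h : Fin q → ℕ, (∀ i, h₀ i ≤ h i) → IsApproxGroup r ℓ (chromSum h A) := by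
  simp only [IsCAAG, IsApproxGroup, chromSum_mul]

theorem stmt15_general {G : Type*} [AddCommGroup G] {q : ℕ} (A : Fin q → Set G) (r ℓ k : ℕ)
    (hCAAG : IsCAAG A r ℓ) (B : Set G) (hB : IsApproxGroup r k B) :
    ∃ h₀ : Fin q → ℕ, ∀ h : Fin q → ℕ, (∀ i, h₀ i ≤ h i) →
      ∃ Y : Finset G, Y.card ≤ ℓ * k ∧
        hfold r (chromSum h A + B) ⊆ (Y : Set G) + chromSum h A + B := by
  obtain ⟨h₀, hA⟩ := isCAAG_iff.1 hCAAG
  simp only [hfold_eq_nsmul, add_assoc]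
  exact ⟨h₀, fun h hh => (hA h hh).add hB⟩

/-- Inhomogeneous extension: if `𝒜` is a chromatic asymptotic `(r,ℓ)`-approximate group
and `B` is a nonempty finite set of size `m`, then the family `S_h = h·𝒜 + B` is an
asymptotic `(r, ℓ·C((r+1)(m−1), m−1))`-approximate family. -/
theorem stmt15 {G : Type*} [AddCommGroup G] {q : ℕ} (A : Fin q → Set G)
    (hA : ∀ i, (A i).Nonempty) (r ℓ : ℕ) (hr : 0 < r) (hℓ : 0 < ℓ)
    (hCAAG : IsCAAG A r ℓ) (B : Finset G) (hB : B.Nonempty) (m : ℕ) (hm : B.card = m) :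
    ∃ h₀ : Fin q → ℕ, ∀ h : Fin q → ℕ, (∀ i, h₀ i ≤ h i) →
      ∃ Y : Finset G, Y.card ≤ ℓ * ((r + 1) * (m - 1)).choose (m - 1) ∧
        hfold r (chromSum h A + (B : Set G)) ⊆ (Y : Set G) + chromSum h A + (B : Set G) := by
  subst hm
  exact stmt15_general A r ℓ _ hCAAG B (isApproxGroup_choose hB hr)
end

section
/- (Asymptotic covering of threshold chromatic layers.) Let 𝒜 = (A₁,…,A_q) be a normalized tuple of finite nonempty sets of integers with a_i* := max A_i ≥ 1 for every i. Fix t, r ∈ ℕ. Then there exists a threshold vector h_{r,t} ∈ ℕ₀^q such that for every h ⪰ h_{r,t} there exists a set X_h ⊆ ℤ with |X_h| ≤ r + 2 and ((rh)·𝒜)^{(t)} ⊆ X_h + (h·𝒜)^{(t)}; that is, for each fixed t, the family of threshold-t chromatic layers forms an asymptotic (r, r+2)-approximate family. -/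
open Pointwise BigOperators

/-- The chromatic representation function: the number of tuples
`(a_{i,1},…,a_{i,h_i})_{i}` with `a_{i,j} ∈ A_i`, each color weakly increasing,
and total sum `n`. -/
noncomputable def chromRep {q : ℕ} (A : Fin q → Set ℤ) (h : Fin q → ℕ) (n : ℤ) : ℕ :=
  Nat.card {a : ∀ i : Fin q, Fin (h i) → ℤ //
    (∀ i j, a i j ∈ A i) ∧ (∀ i, Monotone (a i)) ∧ (∑ i, ∑ j, a i j) = n}

/-- The threshold-`t` chromatic layer `(h·𝒜)^{(t)} = {n : r_{𝒜,h}(n) ≥ t}`. -/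
def chromLayer {q : ℕ} (A : Fin q → Set ℤ) (h : Fin q → ℕ) (t : ℕ) : Set ℤ :=
  {n : ℤ | t ≤ chromRep A h n}

/-!
Sorting identifies the representations counted by `r_{𝒜,h}(n)` with `q`-tuples of multisets. If
the layer is nonempty for some `l`, adding one further representation to a fixed family of `t` of
them shows that all integers at distance at least `c` from both ends of `[0, ∑ hᵢ aᵢ]` lie in the
layer of `h`, where `c` does not depend on `h`. Within distance `c` of the lower (upper) end of
`[0, r ∑ hᵢ aᵢ]`, a representation uses few elements other than `0` (respectively `aᵢ`), so these
extreme elements can be removed injectively until only `hᵢ` elements of colour `i` are left: the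
two ends of the layer of `rh` are covered by two translates of the layer of `h`, one of them by
`0`. The rest is covered by `r + 1` translates of the interval in the middle of the layer of `h`,
which has length `∑ hᵢ aᵢ - 2c`; one of these, too, is the translate by `0`.
-/

/-- The representations of `n` counted by `chromRep`, with each weakly increasing sequence replaced
by its underlying multiset, so that representations can be added and subtracted. -/
def chromMultisets {ι M : Type*} [Fintype ι] [AddCommMonoid M] (A : ι → Set M) (h : ι → ℕ) (n : M) :
    Set (ι → Multiset M) :=
  {m | (∀ i, (m i).card = h i) ∧ (∀ i, ∀ x ∈ m i, x ∈ A i) ∧ ∑ i, (m i).sum = n}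

section SortedTuples

variable {α : Type*} {n : ℕ}

theorem exists_map_univ_val_eq {s : Multiset α} (hs : s.card = n) :
    ∃ f : Fin n → α, Finset.univ.val.map f = s := by
  induction s using Quotient.inductionOn with
  | h l =>
    obtain rfl : l.length = n := hs
    exact ⟨l.get, by simp⟩

theorem bijOn_monotone_map_univ_val [LinearOrder α] :
    Set.BijOn (fun f : Fin n → α => Finset.univ.val.map f) {f | Monotone f}
      {s | s.card = n} := by
  refine ⟨fun f _ => by simp, fun f hf g hg hfg => ?_, fun s hs => ?_⟩
  · have hperm : (List.ofFn f).Perm (List.ofFn g) := by simpa using hfg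
    exact List.ofFn_injective
      (hperm.eq_of_sortedLE (List.sortedLE_ofFn_iff.2 hf) (List.sortedLE_ofFn_iff.2 hg))
  · obtain ⟨f, rfl⟩ := exists_map_univ_val_eq hs
    refine ⟨f ∘ Tuple.sort f, Tuple.monotone_sort f, ?_⟩
    have hsort : Finset.univ.val.map (Tuple.sort f) = Finset.univ.val :=
      congrArg Finset.val (Finset.map_univ_equiv (Tuple.sort f))
    simp only [← Multiset.map_map, hsort]

end SortedTuples

theorem chromRep_eq_ncard_chromMultisets {q : ℕ} (A : Fin q → Set ℤ) (h : Fin q → ℕ) (n : ℤ) :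
    chromRep A h n = (chromMultisets A h n).ncard := by
  refine Set.BijOn.ncard_eq (f := fun a i => Finset.univ.val.map (a i)) ⟨?_, ?_, ?_⟩
  · rintro a ⟨hmem, -, hsum⟩
    refine ⟨fun i => by simp, fun i x hx => ?_, hsum⟩
    obtain ⟨j, -, rfl⟩ := Multiset.mem_map.1 hx
    exact hmem i j
  · rintro a ⟨-, ha, -⟩ b ⟨-, hb, -⟩ hab
    exact funext fun i => bijOn_monotone_map_univ_val.injOn (ha i) (hb i) (congrFun hab i)
  · rintro m ⟨hcard, hmem, hsum⟩
    choose a ha ham using fun i => bijOn_monotone_map_univ_val.surjOn (hcard i)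
    obtain rfl : (fun i => Finset.univ.val.map (a i)) = m := funext ham
    exact ⟨a, ⟨fun i j => hmem i _ (Multiset.mem_map_of_mem _ (Finset.mem_univ_val j)), ha, hsum⟩,
      rfl⟩

theorem mem_chromLayer_iff {q : ℕ} {A : Fin q → Set ℤ} {h : Fin q → ℕ} {t : ℕ} {n : ℤ} :
    n ∈ chromLayer A h t ↔ t ≤ (chromMultisets A h n).ncard := by
  rw [chromLayer, Set.mem_ofPred_eq, chromRep_eq_ncard_chromMultisets]

theorem card_le_count_add_sum_sub {s : Multiset ℤ} {b : ℤ} (hs : ∀ x ∈ s, b ≤ x) :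
    (s.card : ℤ) ≤ s.count b + (s.sum - s.card • b) := by
  induction s using Multiset.induction_on with
  | empty => simp
  | cons x s ih =>
    rw [Multiset.forall_mem_cons] at hs
    have hxs := ih hs.2
    have hx : 1 ≤ ((if b = x then 1 else 0 : ℕ) : ℤ) + (x - b) := by
      split_ifs <;> grind
    simp only [Multiset.card_cons, Multiset.count_cons, Multiset.sum_cons, succ_nsmul]
    push_cast at hx ⊢
    linarith

theorem exists_le_sum_nsmul_eq {ι M : Type*} [Fintype ι] [AddCommMonoid M] [LinearOrder M]
    [IsOrderedCancelAddMonoid M] {a : ι → M} {P : M} (hP : 0 < P) {d : ι → ℕ}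
    (hd : ∀ i, d i • a i = P) {h : ι → ℕ} {w : ℕ}
    (hw : (w + Fintype.card ι) • P ≤ ∑ i, h i • a i) :
    ∃ g ≤ h, ∑ i, g i • a i = w • P := by
  classical
  induction w with
  | zero => exact ⟨0, fun i => Nat.zero_le _, by simp⟩
  | succ w ih =>
    obtain ⟨g, hgh, hg⟩ := ih (le_trans (nsmul_le_nsmul_left hP.le (by lia)) hw)
    -- The summands have more than `card ι • P` left to spend, so one has room for another `P`.
    obtain ⟨i, -, hi⟩ : ∃ i ∈ Finset.univ, g i • a i + P < h i • a i := by
      refine Finset.exists_lt_of_sum_lt (lt_of_lt_of_le ?_ hw)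
      simp only [Finset.sum_add_distrib, hg, Finset.sum_const, Finset.card_univ]
      rw [← add_nsmul]
      exact nsmul_lt_nsmul_left hP (by lia)
    have hai : 0 < a i := by
      by_contra! hai
      exact (hd i ▸ hP).not_ge (nsmul_nonpos hai _)
    have hroom : g i + d i ≤ h i := by
      rw [← hd i, ← add_nsmul] at hi
      exact ((nsmul_left_strictMono hai).lt_iff_lt.1 hi).le
    refine ⟨g + Pi.single i (d i), fun j => ?_, ?_⟩
    · obtain rfl | hj := eq_or_ne j i
      · simpa using hroom
      · simpa [hj] using hgh j
    · have hsingle : ∑ j, (Pi.single i (d i) : ι → ℕ) j • a j = P := by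
        rw [Fintype.sum_eq_single i fun j hj => by simp [hj], Pi.single_eq_same, hd]
      simp only [Pi.add_apply, add_nsmul, Finset.sum_add_distrib, hg, hsingle, one_nsmul]

theorem le_sum_nsmul {ι : Type*} [Fintype ι] {a : ι → ℤ} (ha : ∀ i, 0 < a i) (h : ι → ℕ)
    (i : ι) : (h i : ℤ) ≤ ∑ j, h j • a j := by
  calc (h i : ℤ) ≤ h i • a i := by
        rw [nsmul_eq_mul]; exact le_mul_of_one_le_right (Int.natCast_nonneg _) (ha i)
    _ ≤ ∑ j, h j • a j :=
        Finset.single_le_sum (fun j _ => nsmul_nonneg (ha j).le (h j)) (Finset.mem_univ i)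

theorem exists_forall_exists_nsmul_eq {ι : Type*} [Finite ι] {a : ι → ℤ} (ha : ∀ i, 0 < a i) :
    ∃ P : ℕ, 0 < P ∧ ∀ i, ∃ d : ℕ, d • a i = P := by
  have := Fintype.ofFinite ι
  lift a to ι → ℕ using fun i => (ha i).le
  simp only [Nat.cast_pos] at ha
  refine ⟨∏ i, a i, Finset.prod_pos fun i _ => ha i, fun i => ?_⟩
  obtain ⟨d, hd⟩ := Finset.dvd_prod_of_mem a (Finset.mem_univ i)
  exact ⟨d, by rw [hd, nsmul_eq_mul, mul_comm, Nat.cast_mul]⟩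

theorem closure_eq_top_of_forall_dvd_isUnit {B : Set ℤ}
    (hB : ∀ m : ℤ, (∀ x ∈ B, m ∣ x) → IsUnit m) :
    AddSubgroup.closure B = ⊤ := by
  obtain ⟨g, hg⟩ := Int.subgroup_cyclic (AddSubgroup.closure B)
  rw [← AddSubgroup.zmultiples_eq_closure] at hg
  have hunit : IsUnit g := hB g fun x hx =>
    Int.mem_zmultiples_iff.1 (hg ▸ AddSubgroup.subset_closure hx)
  rw [hg, AddSubgroup.eq_top_iff']
  exact fun x => Int.mem_zmultiples_iff.2 hunit.dvd

theorem exists_card_le_subset_add {S T : Set ℤ} {c L y : ℤ} {r : ℕ} (hL : 0 < L)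
    (hlow : ∀ n ∈ T, n < c → n ∈ S) (hmid : Set.Ico c (c + L) ⊆ S)
    (hhigh : ∀ n ∈ T, c + (r + 1) * L ≤ n → n - y ∈ S) :
    ∃ X : Finset ℤ, X.card ≤ r + 2 ∧ T ⊆ ↑X + S := by
  set X : Finset ℤ := insert y ((Finset.range (r + 1)).image fun j : ℕ => j * L)
  have hmulX {j : ℕ} (hj : j < r + 1) : j * L ∈ X :=
    Finset.mem_insert_of_mem (Finset.mem_image_of_mem _ (Finset.mem_range.2 hj))
  refine ⟨X, ?_, fun n hn => ?_⟩
  · exact (Finset.card_insert_le _ _).trans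
      (by simpa using Finset.card_image_le (s := Finset.range (r + 1)))
  suffices ∃ x ∈ X, n - x ∈ S by
    obtain ⟨x, hx, hxS⟩ := this
    exact ⟨x, hx, n - x, hxS, add_sub_cancel x n⟩
  obtain hnlow | hnlow := lt_or_ge n c
  · exact ⟨_, hmulX r.succ_pos, by simpa using hlow n hn hnlow⟩
  obtain hnhigh | hnhigh := le_or_gt (c + (r + 1) * L) n
  · exact ⟨y, Finset.mem_insert_self _ _, hhigh n hn hnhigh⟩
  obtain ⟨j, hj⟩ := Int.eq_ofNat_of_zero_le (Int.ediv_nonneg (sub_nonneg.2 hnlow) hL.le)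
  have hjr : (n - c) / L < r + 1 := Int.ediv_lt_of_lt_mul hL (by linarith)
  refine ⟨_, hmulX (j := j) (by lia), hmid ?_⟩
  have hdiv := Int.mul_ediv_add_emod (n - c) L
  have hmod_nonneg := Int.emod_nonneg (n - c) hL.ne'
  have hmod_lt := Int.emod_lt_of_pos (n - c) hL
  rw [hj] at hdiv
  constructor <;> linarith

namespace chromMultisets

variable {ι : Type*} [Fintype ι]

section AddCommMonoid

variable {M : Type*} [AddCommMonoid M] {A : ι → Set M} {h k : ι → ℕ} {n p : M}
  {u v : ι → Multiset M}

theorem finite (hA : ∀ i, (A i).Finite) (h : ι → ℕ) (n : M) : (chromMultisets A h n).Finite := by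
  classical
  refine (Set.finite_Icc 0 fun i => h i • (hA i).toFinset.val).subset
    fun m ⟨hcard, hmem, _⟩ => ⟨fun i => zero_le, fun i => Multiset.le_iff_count.2 fun x => ?_⟩
  by_cases hx : x ∈ m i
  · have hxA : Multiset.count x (hA i).toFinset.val = 1 :=
      Multiset.count_eq_one_of_mem (Finset.nodup _) ((hA i).mem_toFinset.2 (hmem i x hx))
    rw [Multiset.count_nsmul, hxA, mul_one, ← hcard i]
    exact Multiset.count_le_card x (m i)
  · rw [Multiset.count_eq_zero_of_notMem hx]
    exact zero_le

theorem zero_mem : 0 ∈ chromMultisets A 0 0 := by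
  simp [chromMultisets]

theorem single_mem [DecidableEq ι] {i : ι} {x : M} (hx : x ∈ A i) :
    Pi.single i {x} ∈ chromMultisets A (Pi.single i 1) x := by
  refine ⟨fun j => ?_, fun j y hy => ?_, ?_⟩
  · obtain rfl | hj := eq_or_ne j i <;> simp [*]
  · obtain rfl | hj := eq_or_ne j i <;> simp_all
  · rw [Fintype.sum_eq_single i fun j hj => by simp [hj]]
    simp

theorem replicate_mem {b : ι → M} (hb : ∀ i, b i ∈ A i) (h : ι → ℕ) :
    (fun i => Multiset.replicate (h i) (b i)) ∈ chromMultisets A h (∑ i, h i • b i) := by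
  refine ⟨by simp, fun i x hx => ?_, by simp⟩
  rw [Multiset.eq_of_mem_replicate hx]
  exact hb i

theorem add_mem (hu : u ∈ chromMultisets A h n) (hv : v ∈ chromMultisets A k p) :
    u + v ∈ chromMultisets A (h + k) (n + p) := by
  obtain ⟨hucard, humem, husum⟩ := hu
  obtain ⟨hvcard, hvmem, hvsum⟩ := hv
  refine ⟨fun i => by simp [hucard, hvcard], fun i x hx => ?_, ?_⟩
  · exact (Multiset.mem_add.1 hx).elim (humem i x) (hvmem i x)
  · simp [Finset.sum_add_distrib, husum, hvsum]

theorem mem_of_add_mem [IsLeftCancelAdd M] (hu : u ∈ chromMultisets A h n)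
    (huv : u + v ∈ chromMultisets A (h + k) (n + p)) : v ∈ chromMultisets A k p := by
  obtain ⟨hucard, -, husum⟩ := hu
  obtain ⟨hcard, hmem, hsum⟩ := huv
  refine ⟨fun i => ?_, fun i x hx => hmem i x (Multiset.mem_add.2 (Or.inr hx)), ?_⟩
  · simpa [hucard] using hcard i
  · simpa [Finset.sum_add_distrib, husum] using hsum

theorem nonempty_mono (h0 : ∀ i, 0 ∈ A i) (hhk : h ≤ k) (hn : (chromMultisets A h n).Nonempty) :
    (chromMultisets A k n).Nonempty := by
  obtain ⟨d, rfl⟩ := exists_add_of_le hhk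
  obtain ⟨u, hu⟩ := hn
  exact ⟨_, by simpa using add_mem hu (replicate_mem h0 d)⟩

theorem ncard_le_ncard_add (hA : ∀ i, (A i).Finite) (hn : (chromMultisets A h n).Nonempty) :
    (chromMultisets A k p).ncard ≤ (chromMultisets A (h + k) (n + p)).ncard := by
  obtain ⟨u, hu⟩ := hn
  exact Set.ncard_le_ncard_of_injOn (u + ·) (fun v hv => add_mem hu hv)
    (fun v _ w _ hvw => add_left_cancel hvw) (finite hA _ _)

theorem exists_nonempty_of_mem_closure {x : M} (hx : x ∈ AddSubmonoid.closure (⋃ i, A i)) :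
    ∃ k, (chromMultisets A k x).Nonempty := by
  classical
  induction hx using AddSubmonoid.closure_induction with
  | mem x hx =>
    obtain ⟨i, hi⟩ := Set.mem_iUnion.1 hx
    exact ⟨_, _, single_mem hi⟩
  | zero => exact ⟨0, 0, zero_mem⟩
  | add x y _ _ hx hy =>
    obtain ⟨k, u, hu⟩ := hx
    obtain ⟨l, v, hv⟩ := hy
    exact ⟨_, _, add_mem hu hv⟩

end AddCommMonoid

section AddCommGroup

variable {M : Type*} [AddCommGroup M] {A : ι → Set M}

-- In a finite group, the submonoid generated by a set is already the subgroup it generates.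
theorem exists_forall_map_eq {G : Type*} [AddCommGroup G] [Finite G] (h0 : ∀ i, 0 ∈ A i)
    (f : M →+ G) (hf : Function.Surjective f) (hA : AddSubgroup.closure (⋃ i, A i) = ⊤) :
    ∃ k, ∀ g, ∃ x, f x = g ∧ (chromMultisets A k x).Nonempty := by
  have hclosure : (AddSubmonoid.closure (⋃ i, A i)).map f = ⊤ := by
    rw [AddMonoidHom.map_mclosure, ← AddSubgroup.closure_toAddSubmonoid_of_finite,
      ← AddMonoidHom.map_closure, hA, AddSubgroup.map_top_of_surjective f hf]
    rfl
  have hlift (g : G) : ∃ x k, f x = g ∧ (chromMultisets A k x).Nonempty := by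
    obtain ⟨x, hx, rfl⟩ : g ∈ (AddSubmonoid.closure (⋃ i, A i)).map f := hclosure ▸ trivial
    obtain ⟨k, hk⟩ := exists_nonempty_of_mem_closure hx
    exact ⟨x, k, rfl, hk⟩
  choose x k hxg hk using hlift
  obtain ⟨K, hK⟩ := (Set.finite_range k).bddAbove
  exact ⟨K, fun g => ⟨x g, hxg g, nonempty_mono h0 (hK ⟨g, rfl⟩) (hk g)⟩⟩

theorem ncard_neg (A : ι → Set M) (h : ι → ℕ) (n : M) :
    (chromMultisets (-A) h (-n)).ncard = (chromMultisets A h n).ncard := by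
  have hneg : Function.Involutive fun (m : ι → Multiset M) i => (m i).map Neg.neg :=
    fun m => by simp
  rw [← Set.ncard_image_of_injective (chromMultisets A h n) hneg.injective,
    hneg.image_eq_preimage_symm]
  congr 1
  ext m
  have hsum (s : Multiset M) : (s.map Neg.neg).sum = -s.sum := s.sum_map_neg'
  simp only [chromMultisets, Set.mem_ofPred_eq, Set.mem_preimage, Multiset.card_map,
    Multiset.forall_mem_map_iff, Pi.neg_apply, Set.mem_neg, hsum, Finset.sum_neg_distrib,
    neg_eq_iff_eq_neg]

end AddCommGroup

section Int

variable {A : ι → Set ℤ} {d k : ι → ℕ} {n : ℤ} {a b : ι → ℤ}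

theorem replicate_le_of_mem_lowerBounds {m : ι → Multiset ℤ} (hb : ∀ i, b i ∈ lowerBounds (A i))
    (hn : ∀ i, n - ∑ j, k j • b j ≤ k i)
    (hm : m ∈ chromMultisets A (d + k) (∑ i, d i • b i + n)) :
    (fun i => Multiset.replicate (d i) (b i)) ≤ m := by
  obtain ⟨hcard, hmem, hsum⟩ := hm
  have hexcess_nonneg (i : ι) : 0 ≤ (m i).sum - (d + k) i • b i := by
    rw [sub_nonneg, ← hcard i]
    exact Multiset.card_nsmul_le_sum fun x hx => hb i (hmem i x hx)
  have hexcess_sum : ∑ i, ((m i).sum - (d + k) i • b i) = n - ∑ i, k i • b i := by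
    simp only [Finset.sum_sub_distrib, hsum, Pi.add_apply, add_nsmul, Finset.sum_add_distrib]
    ring
  intro i
  have hexcess_le : (m i).sum - (d + k) i • b i ≤ k i :=
    (Finset.single_le_sum (fun j _ => hexcess_nonneg j) (Finset.mem_univ i)).trans
      (hexcess_sum.trans_le (hn i))
  have hcount := card_le_count_add_sum_sub fun x hx => hb i (hmem i x hx)
  rw [hcard i] at hcount
  rw [← Multiset.le_count_iff_replicate_le]
  simp only [Pi.add_apply, Nat.cast_add] at hcount hexcess_le
  lia

theorem ncard_add_le_of_isLeast (hA : ∀ i, (A i).Finite) (hb : ∀ i, IsLeast (A i) (b i))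
    (hn : ∀ i, n - ∑ j, k j • b j ≤ k i) :
    (chromMultisets A (d + k) (∑ i, d i • b i + n)).ncard ≤ (chromMultisets A k n).ncard := by
  set pad : ι → Multiset ℤ := fun i => Multiset.replicate (d i) (b i)
  have hpad : pad ∈ chromMultisets A d (∑ i, d i • b i) := replicate_mem (fun i => (hb i).1) d
  have hsub : chromMultisets A (d + k) (∑ i, d i • b i + n) ⊆
      (pad + ·) '' chromMultisets A k n := by
    intro m hm
    obtain ⟨v, rfl⟩ := exists_add_of_le (replicate_le_of_mem_lowerBounds (fun i => (hb i).2) hn hm)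
    exact ⟨v, mem_of_add_mem hpad hm, rfl⟩
  exact (Set.ncard_le_ncard hsub ((finite hA k n).image _)).trans
    (Set.ncard_image_le (finite hA k n))

theorem ncard_add_le_of_isGreatest (hA : ∀ i, (A i).Finite) (ha : ∀ i, IsGreatest (A i) (a i))
    (hn : ∀ i, ∑ j, k j • a j - n ≤ k i) :
    (chromMultisets A (d + k) (∑ i, d i • a i + n)).ncard ≤ (chromMultisets A k n).ncard := by
  rw [← ncard_neg A (d + k), ← ncard_neg A k, neg_add, ← Finset.sum_neg_distrib]
  simp only [← smul_neg]
  refine ncard_add_le_of_isLeast (fun i => (hA i).neg)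
    (fun i => ⟨by simpa using (ha i).1, fun x hx => neg_le.1 ((ha i).2 hx)⟩) fun i => ?_
  simpa [neg_add_eq_sub] using hn i

theorem exists_forall_dvd_sub (h0 : ∀ i, 0 ∈ A i) (hgen : AddSubgroup.closure (⋃ i, A i) = ⊤)
    {P : ℕ} (hP : 0 < P) :
    ∃ (k : ι → ℕ) (C : ℤ), ∀ n : ℤ, ∃ x, (P : ℤ) ∣ n - x ∧ |x| ≤ C ∧
      (chromMultisets A k x).Nonempty := by
  have : NeZero P := ⟨hP.ne'⟩
  obtain ⟨k, hk⟩ := exists_forall_map_eq h0 (Int.castAddHom (ZMod P)) ZMod.intCast_surjective hgen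
  choose x hx hkx using hk
  obtain ⟨C, hC⟩ := (Set.finite_range fun g => |x g|).bddAbove
  exact ⟨k, C, fun n => ⟨x n, (ZMod.intCast_eq_intCast_iff_dvd_sub _ _ _).1 (hx n), hC ⟨n, rfl⟩,
    hkx n⟩⟩

theorem exists_forall_mem_Icc_nonempty (h0 : ∀ i, 0 ∈ A i)
    (hgen : AddSubgroup.closure (⋃ i, A i) = ⊤) (ha : ∀ i, a i ∈ A i) (hpos : ∀ i, 0 < a i) :
    ∃ (k : ι → ℕ) (c : ℤ), ∀ h, ∀ n ∈ Set.Icc c (∑ i, (k + h) i • a i - c),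
      (chromMultisets A (k + h) n).Nonempty := by
  obtain ⟨P, hP, hd⟩ := exists_forall_exists_nsmul_eq hpos
  choose d hd using hd
  obtain ⟨k, C, hres⟩ := exists_forall_dvd_sub h0 hgen hP
  have hka : 0 ≤ ∑ i, k i • a i := Finset.sum_nonneg fun i _ => nsmul_nonneg (hpos i).le _
  have hqP : 0 ≤ Fintype.card ι • (P : ℤ) := nsmul_nonneg (Int.natCast_nonneg P) _
  refine ⟨k, C + Fintype.card ι • (P : ℤ) + ∑ i, k i • a i, fun h n ⟨hcn, hnc⟩ => ?_⟩
  obtain ⟨x, ⟨w, hw⟩, hxC, hx⟩ := hres n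
  obtain ⟨hCx, hxC⟩ := abs_le.1 hxC
  lift w to ℕ using nonneg_of_mul_nonneg_right (a := (P : ℤ)) (by linarith) (by exact_mod_cast hP)
  have hroom : (w + Fintype.card ι) • (P : ℤ) ≤ ∑ i, h i • a i := by
    rw [add_nsmul, nsmul_eq_mul, mul_comm, ← hw]
    simp only [Pi.add_apply, add_nsmul, Finset.sum_add_distrib] at hnc
    linarith
  obtain ⟨g, hgh, hg⟩ := exists_le_sum_nsmul_eq (Int.natCast_pos.2 hP) hd hroom
  obtain ⟨u, hu⟩ := hx
  obtain ⟨v, hv⟩ := nonempty_mono h0 hgh ⟨_, replicate_mem ha g⟩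
  have hn : x + ∑ i, g i • a i = n := by
    rw [hg, nsmul_eq_mul, mul_comm, ← hw, add_sub_cancel]
  exact ⟨u + v, hn ▸ add_mem hu hv⟩

theorem exists_forall_mem_Icc_ncard_le (hA : ∀ i, (A i).Finite) (h0 : ∀ i, 0 ∈ A i)
    (hgen : AddSubgroup.closure (⋃ i, A i) = ⊤) (ha : ∀ i, a i ∈ A i) (hpos : ∀ i, 0 < a i)
    (l : ι → ℕ) (p : ℤ) :
    ∃ (k : ι → ℕ) (c : ℕ), ∀ h, k ≤ h → ∀ n ∈ Set.Icc (c : ℤ) (∑ i, h i • a i - c),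
      (chromMultisets A l p).ncard ≤ (chromMultisets A h n).ncard := by
  obtain ⟨k, c, hk⟩ := exists_forall_mem_Icc_nonempty h0 hgen ha hpos
  refine ⟨k + l, (|c| + |p| + ∑ i, l i • a i).toNat, fun h hklh n ⟨hcn, hnc⟩ => ?_⟩
  obtain ⟨h, rfl⟩ := exists_add_of_le hklh
  have hc := Int.self_le_toNat (|c| + |p| + ∑ i, l i • a i)
  have hla : 0 ≤ ∑ i, l i • a i := Finset.sum_nonneg fun i _ => nsmul_nonneg (hpos i).le _
  have hsum : ∑ i, (k + l + h) i • a i = ∑ i, (k + h) i • a i + ∑ i, l i • a i := by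
    simp only [Pi.add_apply, add_nsmul, Finset.sum_add_distrib]
    ring
  have hne : (chromMultisets A (k + h) (n - p)).Nonempty := by
    refine hk h (n - p) ⟨?_, ?_⟩ <;> linarith [le_abs_self c, le_abs_self p, neg_abs_le p]
  simpa [add_right_comm] using ncard_le_ncard_add (k := l) (p := p) hA hne

end Int

end chromMultisets

section Layers

variable {q : ℕ} {A : Fin q → Set ℤ} {a : Fin q → ℤ} {t : ℕ}

theorem exists_forall_Icc_subset_chromLayer (hA : ∀ i, (A i).Finite) (h0 : ∀ i, 0 ∈ A i)
    (hgen : AddSubgroup.closure (⋃ i, A i) = ⊤) (ha : ∀ i, a i ∈ A i) (hpos : ∀ i, 0 < a i)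
    {l : Fin q → ℕ} (hl : (chromLayer A l t).Nonempty) :
    ∃ (k : Fin q → ℕ) (c : ℕ), ∀ h, k ≤ h →
      Set.Icc (c : ℤ) (∑ i, h i • a i - c) ⊆ chromLayer A h t := by
  obtain ⟨p, hp⟩ := hl
  obtain ⟨k, c, hk⟩ := chromMultisets.exists_forall_mem_Icc_ncard_le hA h0 hgen ha hpos l p
  exact ⟨k, c, fun h hkh n hn =>
    mem_chromLayer_iff.2 ((mem_chromLayer_iff.1 hp).trans (hk h hkh n hn))⟩

theorem exists_card_le_chromLayer_subset_add (hA : ∀ i, (A i).Finite) (h0 : ∀ i, IsLeast (A i) 0)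
    (ha : ∀ i, IsGreatest (A i) (a i)) {h : Fin q → ℕ} {c r : ℕ} (hr : 0 < r)
    (hc : ∀ i, c ≤ h i) (hlarge : 2 * c * (r + 1) < ∑ i, h i • a i)
    (hmid : Set.Icc (c : ℤ) (∑ i, h i • a i - c) ⊆ chromLayer A h t) :
    ∃ X : Finset ℤ, X.card ≤ r + 2 ∧ chromLayer A (fun i => r * h i) t ⊆ ↑X + chromLayer A h t := by
  obtain ⟨s, rfl⟩ := Nat.exists_eq_add_of_lt hr
  set N := ∑ i, h i • a i with hN
  have hsplit : (fun i => (0 + s + 1) * h i) = s • h + h := by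
    ext i
    simp [add_mul]
  have hsN : ∑ i, (s • h) i • a i = s * N := by
    simp [hN, Finset.mul_sum, mul_assoc]
  have hcs : (0 : ℤ) ≤ c * s := by positivity
  push_cast at hlarge
  have hcZ (i) : (c : ℤ) ≤ h i := by exact_mod_cast hc i
  rw [hsplit]
  refine exists_card_le_subset_add (c := c) (L := N - 2 * c) (y := s * N) (by linarith)
    (fun n hn hnc => ?_) (fun n hn => hmid ⟨hn.1, ?_⟩) (fun n hn hnc => ?_)
  · have hlow := chromMultisets.ncard_add_le_of_isLeast (d := s • h) (k := h) (n := n) hA h0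
      fun i => by simpa using hnc.le.trans (hcZ i)
    rw [mem_chromLayer_iff] at hn ⊢
    exact hn.trans (by simpa using hlow)
  · linarith [hn.2]
  · have hhigh := chromMultisets.ncard_add_le_of_isGreatest (d := s • h) (k := h) (n := n - s * N)
      hA ha fun i => by push_cast at hnc; linarith [hcZ i]
    rw [hsN, add_sub_cancel] at hhigh
    rw [mem_chromLayer_iff] at hn ⊢
    exact hn.trans hhigh

end Layers

/-- Asymptotic covering of threshold chromatic layers: for a normalized tuple of finite
nonempty sets of integers with `max Aᵢ ≥ 1` and fixed `t, r ∈ ℕ`, there is a threshold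
vector `h_{r,t}` such that for every `h ⪰ h_{r,t}` there is `X_h ⊆ ℤ` with
`|X_h| ≤ r + 2` and `((rh)·𝒜)^{(t)} ⊆ X_h + (h·𝒜)^{(t)}`. -/
theorem stmt17 {q : ℕ} (A : Fin q → Set ℤ)
    (hfin : ∀ i, (A i).Finite) (hne : ∀ i, (A i).Nonempty)
    (hmin : ∀ i, (0 : ℤ) ∈ A i ∧ ∀ x ∈ A i, 0 ≤ x)
    (hgcd : ∀ m : ℤ, (∀ i, ∀ x ∈ A i, m ∣ x) → IsUnit m)
    (hmax : ∀ i, ∃ x ∈ A i, 1 ≤ x)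
    (t r : ℕ) (ht : 0 < t) (hr : 0 < r) :
    ∃ h₀ : Fin q → ℕ, ∀ h : Fin q → ℕ, (∀ i, h₀ i ≤ h i) →
      ∃ X : Finset ℤ, X.card ≤ r + 2 ∧
        chromLayer A (fun i => r * h i) t ⊆ ↑X + chromLayer A h t := by
  by_cases hlayer : ∃ l, (chromLayer A l t).Nonempty
  swap
  · exact ⟨0, fun h _ => ⟨∅, by simp, fun n hn => absurd ⟨_, n, hn⟩ hlayer⟩⟩
  obtain ⟨l, hl⟩ := hlayer
  choose a ha using fun i => (hfin i).isCompact.exists_isGreatest (hne i)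
  have hpos (i) : 0 < a i := let ⟨x, hx, hx1⟩ := hmax i; hx1.trans ((ha i).2 hx)
  have hgen : AddSubgroup.closure (⋃ i, A i) = ⊤ :=
    closure_eq_top_of_forall_dvd_isUnit fun m hm =>
      hgcd m fun i x hx => hm x (Set.mem_iUnion.2 ⟨i, hx⟩)
  obtain ⟨i₀⟩ : Nonempty (Fin q) := by
    by_contra hq
    exact not_isUnit_zero (hgcd 0 fun i => (hq ⟨i⟩).elim)
  obtain ⟨k, c, hmid⟩ := exists_forall_Icc_subset_chromLayer hfin (fun i => (hmin i).1) hgen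
    (fun i => (ha i).1) hpos hl
  refine ⟨fun i => k i + (2 * c * (r + 1) + 1), fun h hh => ?_⟩
  have hc (i) : 2 * c * (r + 1) < h i := by linarith [hh i]
  refine exists_card_le_chromLayer_subset_add hfin hmin ha hr (fun i => by nlinarith [hc i])
    ((Nat.cast_lt.2 (hc i₀)).trans_le (le_sum_nsmul hpos h i₀))
    (hmid h fun i => (Nat.le_add_right _ _).trans (hh i))
end

section
/- Let 𝒜' = (A₁',…,A_q') be any tuple of nonempty finite sets of integers, and fix t, r ∈ ℕ. Then there exists a threshold vector h_{r,t} ∈ ℕ₀^q such that for every h ⪰ h_{r,t} there exists a set X_h ⊆ ℤ with |X_h| ≤ r + 2 and ((rh)·𝒜')^{(t)} ⊆ X_h + (h·𝒜')^{(t)}. -/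
open Pointwise BigOperators

/-!
A representation is a tuple of multisets, one per color, so adding a fixed representation is
injective and layers satisfy `(h·𝒜)^{(1)} + (k·𝒜)^{(t)} ⊆ ((h+k)·𝒜)^{(t)}`. Let `aᵢ = min Aᵢ`,
`bᵢ = max Aᵢ`, `S h = ∑ hᵢ aᵢ`, `T h = ∑ hᵢ bᵢ`, and let `D` be the group of differences of
integers represented with equal numbers of summands.

* Middle: since `D` is cyclic, some layer contains a whole `D`-class of an interval `[u, v]` longer
  than every `bᵢ - aᵢ`. One more summand of color `i` translates this interval by `aᵢ` and by `bᵢ`,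
  and the two translates overlap, so `(h·𝒜)^{(t)}` contains the `D`-class of an interval
  `[lo, hi]` with `lo - S h` and `T h - hi` independent of `h`.
* Ends: if `n` is within bounded distance of the minimal sum `S (r h)`, every representation of `n`
  uses the minimum of each color many times; deleting `(r-1) hᵢ` copies of each `aᵢ` shows that
  `n - S ((r-1) h)` lies in `(h·𝒜)^{(t)}`. Symmetrically for the maxima.

So `r + 1` translates of `[lo, hi]` by `S ((r-1) h) + j (hi - lo)`, `j ≤ r`, cover the bottom and
the middle of `((r h)·𝒜)^{(t)}`, and the translate by `T ((r-1) h)` covers the top.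
-/

open Fintype (linearCombination)

theorem bijOn_ofFn_monotone (α : Type*) [LinearOrder α] (k : ℕ) :
    Set.BijOn (fun f : Fin k → α => (List.ofFn f : Multiset α)) {f | Monotone f}
      {s | s.card = k} := by
  refine ⟨fun f _ => by simp, fun f hf g hg hfg => List.ofFn_injective <|
    (Multiset.coe_eq_coe.1 hfg).eq_of_sortedLE hf.sortedLE_ofFn hg.sortedLE_ofFn, ?_⟩
  rintro s rfl
  have hlength : (s.sort (· ≤ ·)).length = s.card := s.length_sort _
  have hsorted : (s.sort (· ≤ ·)).SortedLE := (s.pairwise_sort (· ≤ ·)).sortedLE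
  rw [← hlength]
  exact ⟨(s.sort (· ≤ ·)).get, hsorted, by simp only [List.ofFn_get, Multiset.sort_eq]⟩

theorem pi_nat_induction {ι : Type*} [Finite ι] [DecidableEq ι] {p : (ι → ℕ) → Prop} (zero : p 0)
    (add_single : ∀ k i, p k → p (k + Pi.single i 1)) (k : ι → ℕ) : p k := by
  have := Fintype.ofFinite ι
  induction hN : ∑ i, k i generalizing k with
  | zero =>
    have : k = 0 := funext fun i => by simpa using (Finset.sum_eq_zero_iff.1 hN) i
    exact this ▸ zero
  | succ N ih =>
    obtain ⟨i, -, hi⟩ := Finset.exists_ne_zero_of_sum_ne_zero (hN.trans_ne N.succ_ne_zero)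
    have hk : k - Pi.single i 1 + Pi.single i 1 = k :=
      tsub_add_cancel_of_le <|
        update_le_iff.2 ⟨Nat.one_le_iff_ne_zero.2 hi, fun _ _ => Nat.zero_le _⟩
    rw [← hk]
    refine add_single _ _ (ih _ ?_)
    rw [← hk] at hN
    simpa [Finset.sum_add_distrib] using hN

theorem card_sub_count_le_map_sum_sub {M : Type*} [AddCommGroup M] [DecidableEq M] (φ : M →+ ℤ)
    {a : M} {s : Multiset M} (hφ : ∀ x ∈ s, x ≠ a → φ a < φ x) :
    (s.card : ℤ) - s.count a ≤ φ s.sum - s.card * φ a := by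
  induction s using Multiset.induction_on with
  | empty => simp
  | cons x s ih =>
    have ih := ih fun y hy => hφ y (Multiset.mem_cons_of_mem hy)
    have hx := hφ x (Multiset.mem_cons_self x s)
    simp only [Multiset.card_cons, Multiset.sum_cons, map_add, Nat.cast_add, Nat.cast_one]
    obtain rfl | hxa := eq_or_ne x a
    · rw [Multiset.count_cons_self]
      push_cast
      linarith
    · rw [Multiset.count_cons_of_ne hxa.symm]
      linarith [hx hxa]

theorem linearCombination_nat_mono {ι M : Type*} [Fintype ι] [AddCommMonoid M] [PartialOrder M]
    [IsOrderedAddMonoid M] {a b : ι → M} (hab : a ≤ b) (k : ι → ℕ) :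
    linearCombination ℕ a k ≤ linearCombination ℕ b k :=
  Finset.sum_le_sum fun i _ => nsmul_le_nsmul_right (hab i) (k i)

theorem monotone_linearCombination_nat_sub {ι M : Type*} [Fintype ι] [AddCommGroup M]
    [PartialOrder M] [IsOrderedAddMonoid M] {a b : ι → M} (hab : a ≤ b) :
    Monotone fun k => linearCombination ℕ b k - linearCombination ℕ a k := by
  intro k h hkh
  obtain ⟨l, rfl⟩ := exists_add_of_le hkh
  simpa only [map_add, add_sub_add_comm] using
    le_add_of_nonneg_right (sub_nonneg.2 (linearCombination_nat_mono hab l))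

theorem exists_nat_mul_eq_of_dvd {g x : ℤ} {L : ℕ} (hg : 0 ≤ g) (hdvd : g ∣ x) (hx : 0 ≤ x)
    (hxL : x ≤ L * g) : ∃ j ≤ L, x = j * g := by
  obtain ⟨p, rfl⟩ := hdvd
  obtain rfl | hg := hg.eq_or_lt
  · exact ⟨0, Nat.zero_le _, by simp⟩
  lift p to ℕ using nonneg_of_mul_nonneg_right hx hg
  rw [mul_comm] at hxL ⊢
  exact ⟨p, by exact_mod_cast le_of_mul_le_mul_right hxL hg, rfl⟩

theorem exists_nsmul_le_and_le_succ_nsmul {M : Type*} [AddMonoid M] [LinearOrder M] {x w : M}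
    {N : ℕ} (hx : 0 ≤ x) (hxN : x ≤ (N + 1) • w) : ∃ j ≤ N, j • w ≤ x ∧ x ≤ (j + 1) • w := by
  induction N with
  | zero => exact ⟨0, le_rfl, by simpa using hx, hxN⟩
  | succ N ih =>
    obtain hle | hlt := le_or_gt x ((N + 1) • w)
    · obtain ⟨j, hj, hjx⟩ := ih hle
      exact ⟨j, hj.trans N.le_succ, hjx⟩
    · exact ⟨N + 1, le_rfl, hlt.le, hxN⟩

theorem exists_card_le_subset_add_s18 {M : Type*} [AddCommGroup M] [LinearOrder M]
    [IsOrderedAddMonoid M] {P Q : Set M} {D : AddSubgroup M} {α β lo hi : M} {N : ℕ}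
    (hbot : ∀ n ∈ P, n < α + lo → n - α ∈ Q) (htop : ∀ n ∈ P, β + hi < n → n - β ∈ Q)
    (hmid : ∀ n ∈ Set.Icc lo hi, n - lo ∈ D → n ∈ Q) (hPD : ∀ n ∈ P, n - (α + lo) ∈ D)
    (hD : hi - lo ∈ D) (hlen : β + hi - (α + lo) ≤ (N + 1) • (hi - lo)) :
    ∃ X : Finset M, X.card ≤ N + 2 ∧ P ⊆ ↑X + Q := by
  let f : ℕ → M := fun j => α + j • (hi - lo)
  refine ⟨insert β ((Finset.range (N + 1)).image f), ?_, fun n hn => ?_⟩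
  · grw [Finset.card_insert_le, Finset.card_image_le, Finset.card_range]
  suffices n - β ∈ Q ∨ ∃ j ≤ N, n - f j ∈ Q by
    obtain hQ | ⟨j, hj, hQ⟩ := this
    · exact ⟨β, by simp, n - β, hQ, add_sub_cancel _ _⟩
    · have hjX := Finset.mem_image_of_mem f (Finset.mem_range_succ_iff.2 hj)
      exact ⟨f j, Finset.mem_insert_of_mem hjX, n - f j, hQ, add_sub_cancel _ _⟩
  obtain hlo | hlo := lt_or_ge n (α + lo)
  · exact .inr ⟨0, Nat.zero_le _, by simpa [f] using hbot n hn hlo⟩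
  obtain hhi | hhi := lt_or_ge (β + hi) n
  · exact .inl (htop n hn hhi)
  obtain ⟨j, hj, hj_le, hj_ge⟩ := exists_nsmul_le_and_le_succ_nsmul (sub_nonneg.2 hlo)
    ((sub_le_sub_right hhi _).trans hlen)
  have hsub : n - f j - lo = n - (α + lo) - j • (hi - lo) := by simp only [f]; abel
  refine .inr ⟨j, hj, hmid _ ⟨?_, ?_⟩ ?_⟩
  · rwa [← sub_nonneg, hsub, sub_nonneg]
  · rwa [← sub_le_sub_iff_right lo, hsub, sub_le_iff_le_add', ← succ_nsmul]
  · exact hsub ▸ sub_mem (hPD n hn) (D.nsmul_mem hD j)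

section Representations

variable {ι M : Type*} [Fintype ι]

section AddCommMonoid

variable [AddCommMonoid M] {A : ι → Set M} {h k : ι → ℕ} {m n : M} {s t : ℕ∞}

/-- The representations of `n` as a sum of `h i` elements of each `A i`, as tuples of multisets:
the order-free form of the tuples counted by `chromRep`, which makes sense in any commutative
monoid. -/
def multisetReps (A : ι → Set M) (h : ι → ℕ) (n : M) : Set (ι → Multiset M) :=
  {s | (∀ i, (s i).card = h i) ∧ (∀ i, ∀ x ∈ s i, x ∈ A i) ∧ ∑ i, (s i).sum = n}

/-- The elements with at least `t` representations: the analogue of `chromLayer` for `multisetReps`.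
Counting in `ℕ∞` avoids finiteness hypotheses on `A`; the layer at `t = 1` is the sumset `h·A`. -/
def repLayer (A : ι → Set M) (h : ι → ℕ) (t : ℕ∞) : Set M :=
  {n | t ≤ (multisetReps A h n).encard}

theorem bijOn_ofFn_multisetReps [LinearOrder M] (A : ι → Set M) (h : ι → ℕ) (n : M) :
    Set.BijOn (fun a i => (List.ofFn (a i) : Multiset M))
      {a : ∀ i, Fin (h i) → M |
        (∀ i j, a i j ∈ A i) ∧ (∀ i, Monotone (a i)) ∧ ∑ i, ∑ j, a i j = n}
      (multisetReps A h n) := by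
  have hbij := fun i => bijOn_ofFn_monotone M (h i)
  refine ⟨fun a ⟨hmem, _, hsum⟩ => ⟨by simp, ?_, by simpa [List.sum_ofFn] using hsum⟩,
    fun a ha b hb hab => funext fun i =>
      (hbij i).injOn (ha.2.1 i) (hb.2.1 i) (congrFun hab i), fun s ⟨hcard, hmem, hsum⟩ => ?_⟩
  · simpa [List.mem_ofFn] using hmem
  · choose a hmono ha using fun i => (hbij i).surjOn (hcard i)
    obtain rfl : (fun i => (List.ofFn (a i) : Multiset M)) = s := funext ha
    exact ⟨a, ⟨by simpa [List.mem_ofFn] using hmem, hmono, by simpa [List.sum_ofFn] using hsum⟩,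
      rfl⟩

theorem repLayer_anti (hst : s ≤ t) : repLayer A h t ⊆ repLayer A h s :=
  fun _ hn => hst.trans hn

theorem add_mem_multisetReps {u v : ι → Multiset M} (hu : u ∈ multisetReps A h m)
    (hv : v ∈ multisetReps A k n) : u + v ∈ multisetReps A (h + k) (m + n) := by
  obtain ⟨hu_card, hu_mem, hu_sum⟩ := hu
  obtain ⟨hv_card, hv_mem, hv_sum⟩ := hv
  refine ⟨fun i => by simp [hu_card, hv_card], fun i x hx => ?_, ?_⟩
  · exact (Multiset.mem_add.1 hx).elim (hu_mem i x) (hv_mem i x)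
  · simp [Finset.sum_add_distrib, hu_sum, hv_sum]

theorem add_mem_repLayer (hm : m ∈ repLayer A h 1) (hn : n ∈ repLayer A k t) :
    m + n ∈ repLayer A (h + k) t := by
  obtain ⟨u, hu⟩ := Set.one_le_encard_iff_nonempty.1 hm
  exact le_trans hn <| Set.encard_le_encard_of_injOn (f := (u + ·))
    (fun _ hv => add_mem_multisetReps hu hv) (add_right_injective u).injOn

theorem linearCombination_mem_repLayer {a : ι → M} (ha : ∀ i, a i ∈ A i) (h : ι → ℕ) :
    linearCombination ℕ a h ∈ repLayer A h 1 :=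
  Set.one_le_encard_iff_nonempty.2 ⟨fun i => Multiset.replicate (h i) (a i),
    by simp, fun i x hx => Multiset.eq_of_mem_replicate hx ▸ ha i,
    by simp [Fintype.linearCombination_apply]⟩

theorem zero_mem_repLayer (A : ι → Set M) : 0 ∈ repLayer A 0 1 :=
  Set.one_le_encard_iff_nonempty.2 ⟨0, by simp [multisetReps]⟩

theorem nsmul_mem_repLayer (hn : n ∈ repLayer A h 1) (L : ℕ) : L • n ∈ repLayer A (L • h) 1 := by
  induction L with
  | zero => simpa using zero_mem_repLayer A
  | succ L ih => simpa only [succ_nsmul] using add_mem_repLayer ih hn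

theorem nsmul_add_nsmul_mem_repLayer {g : M} (hn : n ∈ repLayer A h 1)
    (hng : n + g ∈ repLayer A h 1) {j L : ℕ} (hj : j ≤ L) :
    L • n + j • g ∈ repLayer A (L • h) 1 := by
  obtain ⟨l, rfl⟩ := Nat.exists_eq_add_of_le hj
  have hmem := add_mem_repLayer (nsmul_mem_repLayer hng j) (nsmul_mem_repLayer hn l)
  rwa [← add_nsmul, nsmul_add, add_right_comm, ← add_nsmul] at hmem

end AddCommMonoid

section AddCommGroup

variable [AddCommGroup M] {A : ι → Set M} {h k : ι → ℕ} {m n : M} {t : ℕ∞}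

/-- The group of all differences of two elements represented by `A` with the same numbers of
summands. -/
def repDiffSubgroup (A : ι → Set M) : AddSubgroup M where
  carrier := {z | ∃ h n, n ∈ repLayer A h 1 ∧ n + z ∈ repLayer A h 1}
  zero_mem' := ⟨0, 0, zero_mem_repLayer A, by simpa using zero_mem_repLayer A⟩
  add_mem' := by
    rintro x y ⟨h, m, hm, hmx⟩ ⟨k, n, hn, hny⟩
    exact ⟨h + k, m + n, add_mem_repLayer hm hn,
      add_add_add_comm m n x y ▸ add_mem_repLayer hmx hny⟩
  neg_mem' := by
    rintro x ⟨h, n, hn, hnx⟩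
    exact ⟨h, n + x, hnx, by simpa using hn⟩

theorem sub_mem_repDiffSubgroup (hm : m ∈ repLayer A h 1) (hn : n ∈ repLayer A h 1) :
    m - n ∈ repDiffSubgroup A :=
  ⟨h, n, hn, by simpa using hm⟩

theorem sub_mem_repDiffSubgroup_of_mem {a b : ι → M} (ha : ∀ i, a i ∈ A i)
    (hb : ∀ i, b i ∈ A i) (i : ι) : b i - a i ∈ repDiffSubgroup A := by
  classical
  simpa using sub_mem_repDiffSubgroup (linearCombination_mem_repLayer hb (Pi.single i 1))
    (linearCombination_mem_repLayer ha (Pi.single i 1))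

section Exposed

variable (φ : M →+ ℤ) {a : ι → M} (hφ : ∀ i, ∀ x ∈ A i, x ≠ a i → φ (a i) < φ x)
include hφ

theorem sub_count_le_of_mem_multisetReps [DecidableEq M] {s : ι → Multiset M}
    (hs : s ∈ multisetReps A h n) (i : ι) :
    (h i : ℤ) - (s i).count (a i) ≤ φ (n - linearCombination ℕ a h) := by
  obtain ⟨hcard, hmem, rfl⟩ := hs
  have hcolor : ∀ i, (h i : ℤ) - (s i).count (a i) ≤ φ (s i).sum - h i * φ (a i) := fun i =>
    hcard i ▸ card_sub_count_le_map_sum_sub φ fun x hx => hφ i x (hmem i x hx)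
  have hnonneg : ∀ i, 0 ≤ φ (s i).sum - h i * φ (a i) := fun i =>
    (sub_nonneg.2 (by exact_mod_cast hcard i ▸ Multiset.count_le_card (a i) (s i))).trans (hcolor i)
  calc (h i : ℤ) - (s i).count (a i)
      ≤ φ (s i).sum - h i * φ (a i) := hcolor i
    _ ≤ ∑ i, (φ (s i).sum - h i * φ (a i)) :=
        Finset.single_le_sum (f := fun i => φ (s i).sum - h i * φ (a i))
          (fun i _ => hnonneg i) (Finset.mem_univ i)
    _ = φ (∑ i, (s i).sum - linearCombination ℕ a h) := by
        simp [Fintype.linearCombination_apply, Finset.sum_sub_distrib]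

-- Every summand other than `a i` raises `φ` by at least `1`, so a representation of `n` contains at
-- least `k i` copies of each `a i`, and these can be deleted.
theorem sub_linearCombination_mem_repLayer_of_map_lt
    (hlt : ∀ i, φ (n - linearCombination ℕ a (h + k)) ≤ h i) (hn : n ∈ repLayer A (h + k) t) :
    n - linearCombination ℕ a k ∈ repLayer A h t := by
  classical
  have hle : ∀ s ∈ multisetReps A (h + k) n, (fun i => Multiset.replicate (k i) (a i)) ≤ s := by
    intro s hs i
    have hcount := (sub_count_le_of_mem_multisetReps φ hφ hs i).trans (hlt i)
    rw [← Multiset.le_count_iff_replicate_le]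
    simp only [Pi.add_apply, Nat.cast_add] at hcount
    omega
  refine le_trans hn <| Set.encard_le_encard_of_injOn
    (f := fun s => s - fun i => Multiset.replicate (k i) (a i)) (fun s hs => ?_)
    fun s hs u hu => (tsub_left_inj (hle s hs) (hle u hu)).1
  obtain ⟨v, rfl⟩ := exists_add_of_le (hle s hs)
  obtain ⟨hcard, hmem, hsum⟩ := hs
  simp only [add_tsub_cancel_left]
  refine ⟨fun i => ?_, fun i x hx => hmem i x (Multiset.mem_add.2 (.inr hx)), ?_⟩
  · have := hcard i
    simp only [Pi.add_apply, Multiset.card_add, Multiset.card_replicate] at this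
    omega
  · simp [← hsum, Finset.sum_add_distrib, Fintype.linearCombination_apply]

end Exposed

end AddCommGroup

section Integers

variable {A : ι → Set ℤ} {a b : ι → ℤ} {t : ℕ∞}

theorem sub_linearCombination_mem_repLayer_of_isLeast (ha : ∀ i, IsLeast (A i) (a i))
    {h k : ι → ℕ} {n : ℤ} (hlt : ∀ i, n - linearCombination ℕ a (h + k) ≤ h i)
    (hn : n ∈ repLayer A (h + k) t) : n - linearCombination ℕ a k ∈ repLayer A h t :=
  sub_linearCombination_mem_repLayer_of_map_lt (AddMonoidHom.id ℤ)
    (fun i _ hx hne => ((ha i).2 hx).lt_of_ne' hne) hlt hn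

theorem sub_linearCombination_mem_repLayer_of_isGreatest (hb : ∀ i, IsGreatest (A i) (b i))
    {h k : ι → ℕ} {n : ℤ} (hlt : ∀ i, linearCombination ℕ b (h + k) - n ≤ h i)
    (hn : n ∈ repLayer A (h + k) t) : n - linearCombination ℕ b k ∈ repLayer A h t :=
  sub_linearCombination_mem_repLayer_of_map_lt (-AddMonoidHom.id ℤ)
    (fun i _ hx hne => neg_lt_neg (((hb i).2 hx).lt_of_ne hne)) (by simpa using hlt) hn

theorem mem_repLayer_add_of_mem_Icc {D : AddSubgroup ℤ} {K : ι → ℕ} {u v : ℤ}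
    (ha : ∀ i, a i ∈ A i) (hb : ∀ i, b i ∈ A i) (hab : a ≤ b) (hD : ∀ i, b i - a i ∈ D)
    (huv : ∀ i, b i - a i ≤ v - u) (hK : ∀ n ∈ Set.Icc u v, n - u ∈ D → n ∈ repLayer A K t)
    (k : ι → ℕ) : ∀ n ∈ Set.Icc (linearCombination ℕ a k + u) (linearCombination ℕ b k + v),
      n - (linearCombination ℕ a k + u) ∈ D → n ∈ repLayer A (k + K) t := by
  classical
  induction k using pi_nat_induction with
  | zero => simpa using hK
  | add_single k i ih =>
    have hle := linearCombination_nat_mono hab k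
    have hstep : ∀ {c : ι → ℤ} {n : ℤ}, (∀ i, c i ∈ A i) → n - c i ∈ repLayer A (k + K) t →
        n ∈ repLayer A (k + Pi.single i 1 + K) t := fun {c n} hc hn => by
      simpa [add_comm, add_left_comm] using
        add_mem_repLayer (linearCombination_mem_repLayer hc (Pi.single i 1)) hn
    simp only [map_add, Fintype.linearCombination_apply_single, one_smul]
    rintro n ⟨hn_lo, hn_hi⟩ hnD
    obtain hn | hn := le_or_gt (n - a i) (linearCombination ℕ b k + v)
    · exact hstep ha (ih _ ⟨by linarith, hn⟩ (by convert hnD using 1; ring))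
    · exact hstep hb (ih _ ⟨by linarith [huv i], by linarith⟩
        (by convert sub_mem hnD (hD i) using 1; ring))

theorem exists_forall_mem_Icc_mem_repLayer {K₀ : ι → ℕ} {σ : ℤ} (ht : 1 ≤ t)
    (hσ : σ ∈ repLayer A K₀ t) {e : ι → ℤ} (he : ∀ i, e i ∈ repDiffSubgroup A) :
    ∃ K u v, u ∈ repLayer A K 1 ∧ v ∈ repLayer A K 1 ∧ u ≤ v ∧ (∀ i, e i ≤ v - u) ∧
      ∀ n ∈ Set.Icc u v, n - u ∈ repDiffSubgroup A → n ∈ repLayer A K t := by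
  obtain ⟨g₀, hg₀⟩ := Int.subgroup_cyclic (repDiffSubgroup A)
  have hdvd : ∀ z, z ∈ repDiffSubgroup A ↔ |g₀| ∣ z := fun z => by
    rw [hg₀, ← AddSubgroup.zmultiples_eq_closure, Int.mem_zmultiples_iff, abs_dvd]
  have hg : 0 ≤ |g₀| := abs_nonneg g₀
  generalize |g₀| = g at hdvd hg
  obtain ⟨K₁, τ, hτ, hτg⟩ := (hdvd g).2 dvd_rfl
  choose c hc using fun i => (hdvd _).1 (he i)
  set L := ∑ i, (c i).toNat
  have hmem : ∀ j ≤ L, L * τ + j * g + σ ∈ repLayer A (L • K₁ + K₀) t := fun j hj => by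
    simpa using add_mem_repLayer (nsmul_add_nsmul_mem_repLayer hτ hτg hj) hσ
  refine ⟨L • K₁ + K₀, L * τ + σ, L * τ + L * g + σ,
    repLayer_anti ht (by simpa using hmem 0 (Nat.zero_le _)), repLayer_anti ht (hmem L le_rfl),
    by nlinarith, fun i => ?_, fun n ⟨hu, hv⟩ hn => ?_⟩
  · have hcL : c i ≤ L := (Int.self_le_toNat _).trans
      (by exact_mod_cast
        Finset.single_le_sum_of_canonicallyOrdered (f := fun i => (c i).toNat) (Finset.mem_univ i))
    rw [hc i]
    nlinarith
  · obtain ⟨j, hj, hnj⟩ := exists_nat_mul_eq_of_dvd hg ((hdvd _).1 hn) (sub_nonneg.2 hu)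
      (L := L) (by linarith)
    convert hmem j hj using 1
    linarith

theorem exists_card_le_repLayer_succ_nsmul_subset {t : ℕ∞} (ht : 1 ≤ t)
    (ha : ∀ i, IsLeast (A i) (a i)) (hb : ∀ i, IsGreatest (A i) (b i)) {h : ι → ℕ} {r : ℕ}
    {lo hi : ℤ} (hlo : lo ∈ repLayer A h 1) (hhi : hi ∈ repLayer A h 1)
    (hfill : ∀ n ∈ Set.Icc lo hi, n - lo ∈ repDiffSubgroup A → n ∈ repLayer A h t)
    (hlo_le : ∀ i, lo - linearCombination ℕ a h ≤ h i)
    (hhi_le : ∀ i, linearCombination ℕ b h - hi ≤ h i)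
    (hlen : r * (linearCombination ℕ b h - linearCombination ℕ a h) ≤ (r + 1) * (hi - lo)) :
    ∃ X : Finset ℤ, X.card ≤ r + 3 ∧ repLayer A ((r + 1) • h) t ⊆ ↑X + repLayer A h t := by
  rw [succ_nsmul']
  refine exists_card_le_subset_add_s18 (N := r + 1) (α := linearCombination ℕ a (r • h))
    (β := linearCombination ℕ b (r • h)) (fun n hn hlt => ?_) (fun n hn hlt => ?_) hfill
    (fun n hn => ?_) (sub_mem_repDiffSubgroup hhi hlo) ?_
  · refine sub_linearCombination_mem_repLayer_of_isLeast ha (fun i => ?_) hn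
    rw [map_add]
    linarith [hlo_le i]
  · refine sub_linearCombination_mem_repLayer_of_isGreatest hb (fun i => ?_) hn
    rw [map_add]
    linarith [hhi_le i]
  · rw [add_comm h] at hn
    exact sub_mem_repDiffSubgroup (repLayer_anti ht hn)
      (add_mem_repLayer (linearCombination_mem_repLayer (fun i => (ha i).1) _) hlo)
  · rw [map_nsmul, map_nsmul, nsmul_eq_mul, nsmul_eq_mul, nsmul_eq_mul]
    push_cast
    linarith

theorem exists_repLayer_succ_nsmul_subset (ha : ∀ i, IsLeast (A i) (a i))
    (hb : ∀ i, IsGreatest (A i) (b i)) {t : ℕ∞} (ht : 1 ≤ t) (r : ℕ) :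
    ∃ h₀ : ι → ℕ, ∀ h ≥ h₀, ∃ X : Finset ℤ, X.card ≤ r + 3 ∧
      repLayer A ((r + 1) • h) t ⊆ ↑X + repLayer A h t := by
  by_cases hempty : ∀ K, repLayer A K t = ∅
  · exact ⟨0, fun h _ => ⟨∅, by simp, by simp [hempty]⟩⟩
  push Not at hempty
  obtain ⟨K₀, σ, hσ⟩ := hempty
  have haA := fun i => (ha i).1
  have hbA := fun i => (hb i).1
  have hab : a ≤ b := fun i => (ha i).2 (hbA i)
  have hD := sub_mem_repDiffSubgroup_of_mem haA hbA
  obtain ⟨K, u, v, hu, hv, huv, hlen, hK⟩ := exists_forall_mem_Icc_mem_repLayer ht hσ hD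
  set S := linearCombination ℕ a
  set T := linearCombination ℕ b
  let c := max (u - S K) (T K - v)
  refine ⟨(r + 1) • K + fun _ => c.toNat, fun h hh => ?_⟩
  have hrK : (r + 1) • K ≤ h := le_self_add.trans hh
  obtain ⟨k, hk⟩ : ∃ k, h = k + K :=
    ⟨h - K, (tsub_add_cancel_of_le ((le_self_nsmul zero_le r.succ_ne_zero).trans hrK)).symm⟩
  have hc : ∀ i, c ≤ h i := fun i =>
    (Int.self_le_toNat _).trans (by exact_mod_cast (Nat.le_add_left _ _).trans (hh i))
  have hS : S h = S k + S K := by rw [hk, map_add]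
  have hT : T h = T k + T K := by rw [hk, map_add]
  have hspread : (r + 1) * (T K - S K) ≤ T h - S h := by
    have hmono : T ((r + 1) • K) - S ((r + 1) • K) ≤ T h - S h :=
      monotone_linearCombination_nat_sub hab hrK
    rwa [map_nsmul, map_nsmul, ← nsmul_sub, nsmul_eq_mul, Nat.cast_succ] at hmono
  refine exists_card_le_repLayer_succ_nsmul_subset (lo := S k + u) (hi := T k + v) ht ha hb
    (hk ▸ add_mem_repLayer (linearCombination_mem_repLayer haA k) hu)
    (hk ▸ add_mem_repLayer (linearCombination_mem_repLayer hbA k) hv)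
    (hk ▸ mem_repLayer_add_of_mem_Icc haA hbA hab hD hlen hK k)
    (fun i => ?_) (fun i => ?_) ?_
  · linarith [(le_max_left _ _).trans (hc i)]
  · linarith [(le_max_right _ _).trans (hc i)]
  · nlinarith

end Integers

end Representations

section ChromLayer

variable {q : ℕ} {A : Fin q → Set ℤ}

theorem chromLayer_eq_repLayer (hfin : ∀ i, (A i).Finite) (h : Fin q → ℕ) (t : ℕ) :
    chromLayer A h t = repLayer A h t := by
  ext n
  have hbij := bijOn_ofFn_multisetReps A h n
  have htuples : {a : ∀ i, Fin (h i) → ℤ | (∀ i j, a i j ∈ A i) ∧ (∀ i, Monotone (a i)) ∧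
      ∑ i, ∑ j, a i j = n}.Finite :=
    (Set.Finite.pi' fun i => Set.Finite.pi' fun _ => hfin i).subset fun a ha => ha.1
  have hreps : (multisetReps A h n).Finite := hbij.finite_iff_finite.1 htuples
  have hrep : chromRep A h n = (multisetReps A h n).ncard :=
    (Nat.card_congr (hbij.equiv _)).trans (Nat.card_coe_set_eq _)
  simp only [chromLayer, repLayer, Set.mem_ofPred_eq, hrep, ← hreps.cast_ncard_eq, Nat.cast_le]

end ChromLayer

/-- Threshold chromatic layers of arbitrary tuples of finite nonempty sets of integers:
for fixed `t, r ∈ ℕ`, there is a threshold vector `h_{r,t}` such that for every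
`h ⪰ h_{r,t}` there is `X_h ⊆ ℤ` with `|X_h| ≤ r + 2` and
`((rh)·𝒜')^{(t)} ⊆ X_h + (h·𝒜')^{(t)}`. -/
theorem stmt18 {q : ℕ} (A : Fin q → Set ℤ)
    (hfin : ∀ i, (A i).Finite) (hne : ∀ i, (A i).Nonempty)
    (t r : ℕ) (ht : 0 < t) (hr : 0 < r) :
    ∃ h₀ : Fin q → ℕ, ∀ h : Fin q → ℕ, (∀ i, h₀ i ≤ h i) →
      ∃ X : Finset ℤ, X.card ≤ r + 2 ∧
        chromLayer A (fun i => r * h i) t ⊆ ↑X + chromLayer A h t := by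
  obtain ⟨r, rfl⟩ := Nat.exists_eq_add_one_of_ne_zero hr.ne'
  choose a ha using fun i => (hfin i).isCompact.exists_isLeast (hne i)
  choose b hb using fun i => (hfin i).isCompact.exists_isGreatest (hne i)
  obtain ⟨h₀, hh₀⟩ := exists_repLayer_succ_nsmul_subset ha hb (Nat.one_le_cast.2 ht) r
  simp only [chromLayer_eq_repLayer hfin]
  exact ⟨h₀, hh₀⟩
end
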